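/- Let (H,α) be a monoidal Hom-Hopf algebra with bijective antipode S, (A,β) a right (H,α)-Hom-comodule algebra, B=A^{coH}. If the canonical map can: A⊗_B A→A⊗H is surjective and there exists a total integral φ:H→A, then the adjoint pair (F,G) is a pair of inverse equivalences between right (B,β|_B)-Hom-modules and right (H,A)-Hom-Hopf modules; that is, for every right B-Hom-module (M,μ) the unit η_M: M→(M⊗_B A)^{coH}, m↦μ⁻¹(m)⊗1_A, is bijective, and for every right (H,A)-Hom-Hopf module (N,ν) the counit ε_N: N^{coH}⊗_B A→N, n⊗a↦n·a, is bijective. -/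

import Mathlib

open TensorProduct

noncomputable section

/-- A (unital) monoidal Hom-bialgebra, following Caenepeel–Goyvaerts.
The algebra axioms are stated pointwise, the coalgebra axioms at the level of
linear maps (using the standard vector-space associator to compare the two
sides of Hom-coassociativity). -/
structure MonoidalHomBialgebra (k : Type) [Field k] (H : Type) [AddCommGroup H] [Module k H] where
  mul : H →ₗ[k] H →ₗ[k] H
  one : H
  comul : H →ₗ[k] H ⊗[k] H
  counit : H →ₗ[k] k
  aut : H ≃ₗ[k] H
  hom_assoc : ∀ a b c, mul (aut a) (mul b c) = mul (mul a b) (aut c)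
  mulOne : ∀ a, mul a one = aut a
  oneMul : ∀ a, mul one a = aut a
  aut_mul : ∀ a b, aut (mul a b) = mul (aut a) (aut b)
  aut_one : aut one = one
  coassoc :
    (TensorProduct.assoc k H H H).toLinearMap ∘ₗ
        (TensorProduct.map comul aut.symm.toLinearMap) ∘ₗ comul =
      (TensorProduct.map aut.symm.toLinearMap comul) ∘ₗ comul
  counit_left :
    (TensorProduct.lid k H).toLinearMap ∘ₗ (TensorProduct.map counit LinearMap.id) ∘ₗ comul =
      aut.symm.toLinearMap
  counit_right :
    (TensorProduct.rid k H).toLinearMap ∘ₗ (TensorProduct.map LinearMap.id counit) ∘ₗ comul =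
      aut.symm.toLinearMap
  comul_aut :
    comul ∘ₗ aut.toLinearMap = (TensorProduct.map aut.toLinearMap aut.toLinearMap) ∘ₗ comul
  counit_aut : counit ∘ₗ aut.toLinearMap = counit
  comul_mul :
    comul ∘ₗ TensorProduct.lift mul =
      (TensorProduct.map (TensorProduct.lift mul) (TensorProduct.lift mul)) ∘ₗ
        (TensorProduct.tensorTensorTensorComm k H H H H).toLinearMap ∘ₗ
          (TensorProduct.map comul comul)
  comul_one : comul one = one ⊗ₜ[k] one
  counit_mul : ∀ a b, counit (mul a b) = counit a * counit b
  counit_one : counit one = 1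

/-- A monoidal Hom-Hopf algebra: a monoidal Hom-bialgebra with an antipode. -/
structure MonoidalHomHopf (k : Type) [Field k] (H : Type) [AddCommGroup H] [Module k H]
    extends MonoidalHomBialgebra k H where
  antipode : H →ₗ[k] H
  antipode_aut : antipode ∘ₗ aut.toLinearMap = aut.toLinearMap ∘ₗ antipode
  antipode_mul_left :
    TensorProduct.lift mul ∘ₗ (TensorProduct.map antipode LinearMap.id) ∘ₗ comul =
      LinearMap.toSpanSingleton k H one ∘ₗ counit
  antipode_mul_right :
    TensorProduct.lift mul ∘ₗ (TensorProduct.map LinearMap.id antipode) ∘ₗ comul =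
      LinearMap.toSpanSingleton k H one ∘ₗ counit

variable {k : Type} [Field k] {H : Type} [AddCommGroup H] [Module k H]

/-- A right (H,α)-Hom-comodule. -/
structure HomComodule (Hb : MonoidalHomBialgebra k H) (M : Type) [AddCommGroup M] [Module k M] where
  coact : M →ₗ[k] M ⊗[k] H
  aut : M ≃ₗ[k] M
  coassoc :
    (TensorProduct.map aut.symm.toLinearMap Hb.comul) ∘ₗ coact =
      (TensorProduct.assoc k M H H).toLinearMap ∘ₗ
        (TensorProduct.map coact Hb.aut.symm.toLinearMap) ∘ₗ coact
  counit :
    (TensorProduct.rid k M).toLinearMap ∘ₗ (TensorProduct.map LinearMap.id Hb.counit) ∘ₗ coact =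
      aut.symm.toLinearMap
  coact_aut :
    coact ∘ₗ aut.toLinearMap = (TensorProduct.map aut.toLinearMap Hb.aut.toLinearMap) ∘ₗ coact

/-- A left (H,α)-Hom-comodule. -/
structure HomLeftComodule (Hb : MonoidalHomBialgebra k H) (M : Type) [AddCommGroup M] [Module k M] where
  coact : M →ₗ[k] H ⊗[k] M
  aut : M ≃ₗ[k] M
  coassoc :
    (TensorProduct.map Hb.comul aut.symm.toLinearMap) ∘ₗ coact =
      (TensorProduct.assoc k H H M).symm.toLinearMap ∘ₗ
        (TensorProduct.map Hb.aut.symm.toLinearMap coact) ∘ₗ coact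
  counit :
    (TensorProduct.lid k M).toLinearMap ∘ₗ (TensorProduct.map Hb.counit LinearMap.id) ∘ₗ coact =
      aut.symm.toLinearMap
  coact_aut :
    coact ∘ₗ aut.toLinearMap = (TensorProduct.map Hb.aut.toLinearMap aut.toLinearMap) ∘ₗ coact

/-- A right (H,α)-Hom-comodule algebra. -/
structure HomComoduleAlgebra (Hb : MonoidalHomBialgebra k H) (A : Type) [AddCommGroup A] [Module k A] where
  mul : A →ₗ[k] A →ₗ[k] A
  one : A
  aut : A ≃ₗ[k] A
  hom_assoc : ∀ a b c, mul (aut a) (mul b c) = mul (mul a b) (aut c)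
  mulOne : ∀ a, mul a one = aut a
  oneMul : ∀ a, mul one a = aut a
  aut_mul : ∀ a b, aut (mul a b) = mul (aut a) (aut b)
  aut_one : aut one = one
  coact : A →ₗ[k] A ⊗[k] H
  coassoc :
    (TensorProduct.map aut.symm.toLinearMap Hb.comul) ∘ₗ coact =
      (TensorProduct.assoc k A H H).toLinearMap ∘ₗ
        (TensorProduct.map coact Hb.aut.symm.toLinearMap) ∘ₗ coact
  counit :
    (TensorProduct.rid k A).toLinearMap ∘ₗ (TensorProduct.map LinearMap.id Hb.counit) ∘ₗ coact =
      aut.symm.toLinearMap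
  coact_aut :
    coact ∘ₗ aut.toLinearMap = (TensorProduct.map aut.toLinearMap Hb.aut.toLinearMap) ∘ₗ coact
  coact_mul :
    coact ∘ₗ TensorProduct.lift mul =
      (TensorProduct.map (TensorProduct.lift mul) (TensorProduct.lift Hb.mul)) ∘ₗ
        (TensorProduct.tensorTensorTensorComm k A H A H).toLinearMap ∘ₗ
          (TensorProduct.map coact coact)
  coact_one : coact one = one ⊗ₜ[k] Hb.one

variable {A : Type} [AddCommGroup A] [Module k A]

/-- A right (A,β)-Hom-module. -/
structure HomModule {Hb : MonoidalHomBialgebra k H} (Ac : HomComoduleAlgebra Hb A)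
    (M : Type) [AddCommGroup M] [Module k M] where
  act : M →ₗ[k] A →ₗ[k] M
  aut : M ≃ₗ[k] M
  act_act : ∀ m a b, act (act m a) (Ac.aut b) = act (aut m) (Ac.mul a b)
  act_one : ∀ m, act m Ac.one = aut m
  aut_act : ∀ m a, aut (act m a) = act (aut m) (Ac.aut a)

/-- A right Hom-module over the subalgebra of `A` carved out by `Bset`
(typically the coinvariants `B = A^{co H}`): the action is a bilinear map
`M × A → M` whose Hom-module axioms are only required on `Bset`. -/
structure HomModuleOn {Hb : MonoidalHomBialgebra k H} (Ac : HomComoduleAlgebra Hb A)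
    (Bset : Set A) (M : Type) [AddCommGroup M] [Module k M] where
  act : M →ₗ[k] A →ₗ[k] M
  aut : M ≃ₗ[k] M
  act_act : ∀ m, ∀ b ∈ Bset, ∀ b' ∈ Bset, act (act m b) (Ac.aut b') = act (aut m) (Ac.mul b b')
  act_one : ∀ m, act m Ac.one = aut m
  aut_act : ∀ m, ∀ b ∈ Bset, aut (act m b) = act (aut m) (Ac.aut b)

/-- A left Hom-module over the subalgebra of `A` carved out by `Bset`. -/
structure HomLeftModuleOn {Hb : MonoidalHomBialgebra k H} (Ac : HomComoduleAlgebra Hb A)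
    (Bset : Set A) (M : Type) [AddCommGroup M] [Module k M] where
  act : A →ₗ[k] M →ₗ[k] M
  aut : M ≃ₗ[k] M
  act_act : ∀ m, ∀ b ∈ Bset, ∀ b' ∈ Bset, act (Ac.aut b) (act b' m) = act (Ac.mul b b') (aut m)
  act_one : ∀ m, act Ac.one m = aut m
  aut_act : ∀ m, ∀ b ∈ Bset, aut (act b m) = act (Ac.aut b) (aut m)

/-- A right-right (H,A)-Hom-Hopf module (a relative Hom-Hopf module). -/
structure HomHopfModule {Hb : MonoidalHomBialgebra k H} (Ac : HomComoduleAlgebra Hb A)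
    (N : Type) [AddCommGroup N] [Module k N] where
  act : N →ₗ[k] A →ₗ[k] N
  aut : N ≃ₗ[k] N
  act_act : ∀ n a b, act (act n a) (Ac.aut b) = act (aut n) (Ac.mul a b)
  act_one : ∀ n, act n Ac.one = aut n
  aut_act : ∀ n a, aut (act n a) = act (aut n) (Ac.aut a)
  coact : N →ₗ[k] N ⊗[k] H
  coassoc :
    (TensorProduct.map aut.symm.toLinearMap Hb.comul) ∘ₗ coact =
      (TensorProduct.assoc k N H H).toLinearMap ∘ₗ
        (TensorProduct.map coact Hb.aut.symm.toLinearMap) ∘ₗ coact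
  counit :
    (TensorProduct.rid k N).toLinearMap ∘ₗ (TensorProduct.map LinearMap.id Hb.counit) ∘ₗ coact =
      aut.symm.toLinearMap
  coact_aut :
    coact ∘ₗ aut.toLinearMap = (TensorProduct.map aut.toLinearMap Hb.aut.toLinearMap) ∘ₗ coact
  compat :
    coact ∘ₗ TensorProduct.lift act =
      (TensorProduct.map (TensorProduct.lift act) (TensorProduct.lift Hb.mul)) ∘ₗ
        (TensorProduct.tensorTensorTensorComm k N H A H).toLinearMap ∘ₗ
          (TensorProduct.map coact Ac.coact)

/-- A left-right (H,A)-Hom-Hopf module. -/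
structure LRHomHopfModule {Hb : MonoidalHomBialgebra k H} (Ac : HomComoduleAlgebra Hb A)
    (N : Type) [AddCommGroup N] [Module k N] where
  act : A →ₗ[k] N →ₗ[k] N
  aut : N ≃ₗ[k] N
  act_act : ∀ n a b, act (Ac.aut a) (act b n) = act (Ac.mul a b) (aut n)
  act_one : ∀ n, act Ac.one n = aut n
  aut_act : ∀ n a, aut (act a n) = act (Ac.aut a) (aut n)
  coact : N →ₗ[k] N ⊗[k] H
  coassoc :
    (TensorProduct.map aut.symm.toLinearMap Hb.comul) ∘ₗ coact =
      (TensorProduct.assoc k N H H).toLinearMap ∘ₗ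
        (TensorProduct.map coact Hb.aut.symm.toLinearMap) ∘ₗ coact
  counit :
    (TensorProduct.rid k N).toLinearMap ∘ₗ (TensorProduct.map LinearMap.id Hb.counit) ∘ₗ coact =
      aut.symm.toLinearMap
  coact_aut :
    coact ∘ₗ aut.toLinearMap = (TensorProduct.map aut.toLinearMap Hb.aut.toLinearMap) ∘ₗ coact
  compat :
    coact ∘ₗ TensorProduct.lift act =
      (TensorProduct.map (TensorProduct.lift act) (TensorProduct.lift Hb.mul)) ∘ₗ
        (TensorProduct.tensorTensorTensorComm k A H N H).toLinearMap ∘ₗ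
          (TensorProduct.map Ac.coact coact)

/-- Coinvariants (as a set) of a coaction `coact` with structure automorphism `autM`. -/
def coinvSetOf {M : Type} [AddCommGroup M] [Module k M] (oneH : H)
    (coact : M →ₗ[k] M ⊗[k] H) (autM : M ≃ₗ[k] M) : Set M :=
  {m | coact m = autM.symm m ⊗ₜ[k] oneH}

/-- Coinvariants as a submodule. -/
def coinvSubmoduleOf {M : Type} [AddCommGroup M] [Module k M] (oneH : H)
    (coact : M →ₗ[k] M ⊗[k] H) (autM : M ≃ₗ[k] M) : Submodule k M :=
  LinearMap.ker (coact - ((TensorProduct.mk k M H).flip oneH) ∘ₗ autM.symm.toLinearMap)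

/-- The coinvariants `B = A^{co H}` of a Hom-comodule algebra. -/
def coinvA {Hb : MonoidalHomBialgebra k H} (Ac : HomComoduleAlgebra Hb A) : Set A :=
  coinvSetOf Hb.one Ac.coact Ac.aut

/-- The defining relations of the tensor product `M ⊗_B A` for a right `B`-Hom-module `M`. -/
def relSubR {M : Type} [AddCommGroup M] [Module k M]
    (mulA : A →ₗ[k] A →ₗ[k] A) (autA : A ≃ₗ[k] A) (Bset : Set A)
    (act : M →ₗ[k] A →ₗ[k] M) (autM : M ≃ₗ[k] M) : Submodule k (M ⊗[k] A) :=
  Submodule.span k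
    {x | ∃ m a b, b ∈ Bset ∧ x = act m b ⊗ₜ[k] autA a - autM m ⊗ₜ[k] mulA b a}

/-- The defining relations of the tensor product `A ⊗_B M` for a left `B`-Hom-module `M`. -/
def relSubL {M : Type} [AddCommGroup M] [Module k M]
    (mulA : A →ₗ[k] A →ₗ[k] A) (autA : A ≃ₗ[k] A) (Bset : Set A)
    (act : A →ₗ[k] M →ₗ[k] M) (autM : M ≃ₗ[k] M) : Submodule k (A ⊗[k] M) :=
  Submodule.span k
    {x | ∃ a m b, b ∈ Bset ∧ x = autA a ⊗ₜ[k] act b m - mulA a b ⊗ₜ[k] autM m}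

/-- The cotensor product `X □_H V` of a right Hom-comodule and a left Hom-comodule,
as a submodule of `X ⊗ V`. -/
def cotensorSub {X V : Type} [AddCommGroup X] [Module k X] [AddCommGroup V] [Module k V]
    (coactX : X →ₗ[k] X ⊗[k] H) (autX : X ≃ₗ[k] X)
    (coactV : V →ₗ[k] H ⊗[k] V) (autV : V ≃ₗ[k] V) : Submodule k (X ⊗[k] V) :=
  LinearMap.ker
    ((TensorProduct.map coactX autV.symm.toLinearMap) -
      ((TensorProduct.assoc k X H V).symm.toLinearMap ∘ₗ
        TensorProduct.map autX.symm.toLinearMap coactV))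

/-- The canonical Galois map at the level of `A ⊗ A`:
`a ⊗ b ↦ β⁻¹(a)·b₍₀₎ ⊗ α(b₍₁₎)`. -/
def canPreLin {Hb : MonoidalHomBialgebra k H} (Ac : HomComoduleAlgebra Hb A) :
    A ⊗[k] A →ₗ[k] A ⊗[k] H :=
  (TensorProduct.map (TensorProduct.lift Ac.mul) Hb.aut.toLinearMap) ∘ₗ
    (TensorProduct.assoc k A A H).symm.toLinearMap ∘ₗ
      (TensorProduct.map Ac.aut.symm.toLinearMap Ac.coact)

/-- The second canonical Galois map at the level of `A ⊗ A`:
`a ⊗ b ↦ a₍₀₎·β⁻¹(b) ⊗ α(a₍₁₎)`. -/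
def canPreLin' {Hb : MonoidalHomBialgebra k H} (Ac : HomComoduleAlgebra Hb A) :
    A ⊗[k] A →ₗ[k] A ⊗[k] H :=
  (TensorProduct.map (TensorProduct.lift Ac.mul) Hb.aut.toLinearMap) ∘ₗ
    (TensorProduct.assoc k A A H).symm.toLinearMap ∘ₗ
      (TensorProduct.map LinearMap.id (TensorProduct.comm k H A).toLinearMap) ∘ₗ
        (TensorProduct.assoc k A H A).toLinearMap ∘ₗ
          (TensorProduct.map Ac.coact Ac.aut.symm.toLinearMap)

/-- `φ : H → A` is a total integral. -/
def IsTotalIntegral {Hb : MonoidalHomBialgebra k H} (Ac : HomComoduleAlgebra Hb A)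
    (φ : H →ₗ[k] A) : Prop :=
  φ ∘ₗ Hb.aut.toLinearMap = Ac.aut.toLinearMap ∘ₗ φ ∧
    Ac.coact ∘ₗ φ = (TensorProduct.map φ LinearMap.id) ∘ₗ Hb.comul ∧
      φ Hb.one = Ac.one

/-- The Hom-comodule structure on `M ⊗ A` inducing that of `M ⊗_B A`:
`m ⊗ a ↦ (μ⁻¹(m) ⊗ a₍₀₎) ⊗ α(a₍₁₎)`. -/
def quotCoactPreR {Hb : MonoidalHomBialgebra k H} (Ac : HomComoduleAlgebra Hb A)
    {M : Type} [AddCommGroup M] [Module k M] (autM : M ≃ₗ[k] M) :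
    (M ⊗[k] A) →ₗ[k] (M ⊗[k] A) ⊗[k] H :=
  (TensorProduct.assoc k M A H).symm.toLinearMap ∘ₗ
    TensorProduct.map autM.symm.toLinearMap
      ((TensorProduct.map LinearMap.id Hb.aut.toLinearMap) ∘ₗ Ac.coact)

/-- The Hom-comodule structure on `A ⊗ M` inducing that of `A ⊗_B M`:
`a ⊗ m ↦ (a₍₀₎ ⊗ μ⁻¹(m)) ⊗ α(a₍₁₎)`. -/
def quotCoactPreL {Hb : MonoidalHomBialgebra k H} (Ac : HomComoduleAlgebra Hb A)
    {M : Type} [AddCommGroup M] [Module k M] (autM : M ≃ₗ[k] M) :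
    (A ⊗[k] M) →ₗ[k] (A ⊗[k] M) ⊗[k] H :=
  (TensorProduct.assoc k A M H).symm.toLinearMap ∘ₗ
    (TensorProduct.map LinearMap.id (TensorProduct.comm k H M).toLinearMap) ∘ₗ
      (TensorProduct.assoc k A H M).toLinearMap ∘ₗ
        TensorProduct.map
          ((TensorProduct.map LinearMap.id Hb.aut.toLinearMap) ∘ₗ Ac.coact)
          autM.symm.toLinearMap

/-- Bijectivity of the adjunction unit `η_M : M → (M ⊗_B A)^{co H}`, `m ↦ μ⁻¹(m) ⊗ 1_A`,
for a right `B`-Hom-module `M`.  Since the Hom-comodule structure of `M ⊗_B A` is the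
one induced from `M ⊗ A`, it is quantified over all maps `ρbar` (resp. `θ`) induced by
the comodule structure (resp. by `μ⁻¹ ⊗ β⁻¹`) on `M ⊗ A`. -/
def UnitBijectiveR {Hb : MonoidalHomBialgebra k H} (Ac : HomComoduleAlgebra Hb A)
    (Bset : Set A) {M : Type} [AddCommGroup M] [Module k M]
    (S : HomModuleOn Ac Bset M) : Prop :=
  ∀ (ρbar : ((M ⊗[k] A) ⧸ relSubR Ac.mul Ac.aut Bset S.act S.aut) →ₗ[k]
      ((M ⊗[k] A) ⧸ relSubR Ac.mul Ac.aut Bset S.act S.aut) ⊗[k] H)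
    (θ : ((M ⊗[k] A) ⧸ relSubR Ac.mul Ac.aut Bset S.act S.aut) →ₗ[k]
      ((M ⊗[k] A) ⧸ relSubR Ac.mul Ac.aut Bset S.act S.aut)),
    ρbar ∘ₗ (relSubR Ac.mul Ac.aut Bset S.act S.aut).mkQ =
      (TensorProduct.map (relSubR Ac.mul Ac.aut Bset S.act S.aut).mkQ LinearMap.id) ∘ₗ
        quotCoactPreR Ac S.aut →
    θ ∘ₗ (relSubR Ac.mul Ac.aut Bset S.act S.aut).mkQ =
      (relSubR Ac.mul Ac.aut Bset S.act S.aut).mkQ ∘ₗ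
        TensorProduct.map S.aut.symm.toLinearMap Ac.aut.symm.toLinearMap →
    ((∀ m : M, ρbar ((relSubR Ac.mul Ac.aut Bset S.act S.aut).mkQ (S.aut.symm m ⊗ₜ[k] Ac.one)) =
        θ ((relSubR Ac.mul Ac.aut Bset S.act S.aut).mkQ (S.aut.symm m ⊗ₜ[k] Ac.one)) ⊗ₜ[k] Hb.one) ∧
      Function.Injective
        (fun m : M => (relSubR Ac.mul Ac.aut Bset S.act S.aut).mkQ (S.aut.symm m ⊗ₜ[k] Ac.one)) ∧
      ∀ x, ρbar x = θ x ⊗ₜ[k] Hb.one →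
        ∃ m : M, (relSubR Ac.mul Ac.aut Bset S.act S.aut).mkQ (S.aut.symm m ⊗ₜ[k] Ac.one) = x)

/-- The relations of `N^{co H} ⊗_B A` for a right (H,A)-Hom-Hopf module `N`;
the closure of the coinvariants under the `B`-action and the automorphism is
encoded by existential membership. -/
def relCoinvR {Hb : MonoidalHomBialgebra k H} (Ac : HomComoduleAlgebra Hb A)
    (Bset : Set A) {N : Type} [AddCommGroup N] [Module k N]
    (P : HomHopfModule Ac N) :
    Submodule k ((coinvSubmoduleOf Hb.one P.coact P.aut : Submodule k N) ⊗[k] A) :=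
  Submodule.span k
    {x | ∃ (n n' n'' : coinvSubmoduleOf Hb.one P.coact P.aut) (a b : A), b ∈ Bset ∧
      (n' : N) = P.act n b ∧ (n'' : N) = P.aut n ∧
      x = n' ⊗ₜ[k] Ac.aut a - n'' ⊗ₜ[k] Ac.mul b a}

/-- The counit of the adjunction at the level of `N^{co H} ⊗ A`: `n ⊗ a ↦ n · a`. -/
def counitPre {Hb : MonoidalHomBialgebra k H} (Ac : HomComoduleAlgebra Hb A)
    {N : Type} [AddCommGroup N] [Module k N] (P : HomHopfModule Ac N) :
    ((coinvSubmoduleOf Hb.one P.coact P.aut : Submodule k N) ⊗[k] A) →ₗ[k] N :=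
  TensorProduct.lift (P.act ∘ₗ (coinvSubmoduleOf Hb.one P.coact P.aut).subtype)

/-- Bijectivity of the adjunction counit `ε_N : N^{co H} ⊗_B A → N`, `n ⊗ a ↦ n·a`:
equivalently, the lift `N^{co H} ⊗ A → N` is surjective and its kernel is exactly
the defining relations of `⊗_B`. -/
def CounitBijectiveR {Hb : MonoidalHomBialgebra k H} (Ac : HomComoduleAlgebra Hb A)
    (Bset : Set A) {N : Type} [AddCommGroup N] [Module k N]
    (P : HomHopfModule Ac N) : Prop :=
  Function.Surjective (counitPre Ac P) ∧ LinearMap.ker (counitPre Ac P) = relCoinvR Ac Bset P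

/-- Bijectivity of the adjunction unit `η'_M : M → (A ⊗_B M)^{co H}`, `m ↦ 1_A ⊗ μ⁻¹(m)`,
for a left `B`-Hom-module `M`. -/
def UnitBijectiveL {Hb : MonoidalHomBialgebra k H} (Ac : HomComoduleAlgebra Hb A)
    (Bset : Set A) {M : Type} [AddCommGroup M] [Module k M]
    (S : HomLeftModuleOn Ac Bset M) : Prop :=
  ∀ (ρbar : ((A ⊗[k] M) ⧸ relSubL Ac.mul Ac.aut Bset S.act S.aut) →ₗ[k]
      ((A ⊗[k] M) ⧸ relSubL Ac.mul Ac.aut Bset S.act S.aut) ⊗[k] H)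
    (θ : ((A ⊗[k] M) ⧸ relSubL Ac.mul Ac.aut Bset S.act S.aut) →ₗ[k]
      ((A ⊗[k] M) ⧸ relSubL Ac.mul Ac.aut Bset S.act S.aut)),
    ρbar ∘ₗ (relSubL Ac.mul Ac.aut Bset S.act S.aut).mkQ =
      (TensorProduct.map (relSubL Ac.mul Ac.aut Bset S.act S.aut).mkQ LinearMap.id) ∘ₗ
        quotCoactPreL Ac S.aut →
    θ ∘ₗ (relSubL Ac.mul Ac.aut Bset S.act S.aut).mkQ =
      (relSubL Ac.mul Ac.aut Bset S.act S.aut).mkQ ∘ₗ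
        TensorProduct.map Ac.aut.symm.toLinearMap S.aut.symm.toLinearMap →
    ((∀ m : M, ρbar ((relSubL Ac.mul Ac.aut Bset S.act S.aut).mkQ (Ac.one ⊗ₜ[k] S.aut.symm m)) =
        θ ((relSubL Ac.mul Ac.aut Bset S.act S.aut).mkQ (Ac.one ⊗ₜ[k] S.aut.symm m)) ⊗ₜ[k] Hb.one) ∧
      Function.Injective
        (fun m : M => (relSubL Ac.mul Ac.aut Bset S.act S.aut).mkQ (Ac.one ⊗ₜ[k] S.aut.symm m)) ∧
      ∀ x, ρbar x = θ x ⊗ₜ[k] Hb.one →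
        ∃ m : M, (relSubL Ac.mul Ac.aut Bset S.act S.aut).mkQ (Ac.one ⊗ₜ[k] S.aut.symm m) = x)

/-- The relations of `A ⊗_B N^{co H}` for a left-right (H,A)-Hom-Hopf module `N`. -/
def relCoinvL {Hb : MonoidalHomBialgebra k H} (Ac : HomComoduleAlgebra Hb A)
    (Bset : Set A) {N : Type} [AddCommGroup N] [Module k N]
    (P : LRHomHopfModule Ac N) :
    Submodule k (A ⊗[k] (coinvSubmoduleOf Hb.one P.coact P.aut : Submodule k N)) :=
  Submodule.span k
    {x | ∃ (n n' n'' : coinvSubmoduleOf Hb.one P.coact P.aut) (a b : A), b ∈ Bset ∧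
      (n' : N) = P.act b n ∧ (n'' : N) = P.aut n ∧
      x = Ac.aut a ⊗ₜ[k] n' - Ac.mul a b ⊗ₜ[k] n''}

/-- The counit at the level of `A ⊗ N^{co H}`: `a ⊗ n ↦ a · n`. -/
def counitPreL {Hb : MonoidalHomBialgebra k H} (Ac : HomComoduleAlgebra Hb A)
    {N : Type} [AddCommGroup N] [Module k N] (P : LRHomHopfModule Ac N) :
    (A ⊗[k] (coinvSubmoduleOf Hb.one P.coact P.aut : Submodule k N)) →ₗ[k] N :=
  TensorProduct.lift (P.act.compl₂ (coinvSubmoduleOf Hb.one P.coact P.aut).subtype)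

/-- Bijectivity of the counit `ε'_N : A ⊗_B N^{co H} → N`. -/
def CounitBijectiveL {Hb : MonoidalHomBialgebra k H} (Ac : HomComoduleAlgebra Hb A)
    (Bset : Set A) {N : Type} [AddCommGroup N] [Module k N]
    (P : LRHomHopfModule Ac N) : Prop :=
  Function.Surjective (counitPreL Ac P) ∧ LinearMap.ker (counitPreL Ac P) = relCoinvL Ac Bset P

/-- A morphism of right `B`-Hom-modules. -/
def IsHomModuleOnHomR {Hb : MonoidalHomBialgebra k H} (Ac : HomComoduleAlgebra Hb A)
    (Bset : Set A) {M₁ M₂ : Type} [AddCommGroup M₁] [Module k M₁] [AddCommGroup M₂] [Module k M₂]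
    (S₁ : HomModuleOn Ac Bset M₁) (S₂ : HomModuleOn Ac Bset M₂) (f : M₁ →ₗ[k] M₂) : Prop :=
  (∀ m, ∀ b ∈ Bset, f (S₁.act m b) = S₂.act (f m) b) ∧ ∀ m, f (S₁.aut m) = S₂.aut (f m)

/-- A morphism of left `B`-Hom-modules. -/
def IsHomModuleOnHomL {Hb : MonoidalHomBialgebra k H} (Ac : HomComoduleAlgebra Hb A)
    (Bset : Set A) {M₁ M₂ : Type} [AddCommGroup M₁] [Module k M₁] [AddCommGroup M₂] [Module k M₂]
    (S₁ : HomLeftModuleOn Ac Bset M₁) (S₂ : HomLeftModuleOn Ac Bset M₂) (f : M₁ →ₗ[k] M₂) : Prop :=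
  (∀ m, ∀ b ∈ Bset, f (S₁.act b m) = S₂.act b (f m)) ∧ ∀ m, f (S₁.aut m) = S₂.aut (f m)

/-- `A` is faithfully flat as a left `B`-Hom-module: the induced functor `− ⊗_B A`
on right `B`-Hom-modules preserves and reflects exactness. -/
def FaithfullyFlatLeftOf {Hb : MonoidalHomBialgebra k H} (Ac : HomComoduleAlgebra Hb A)
    (Bset : Set A) : Prop :=
  ∀ (M₁ M₂ M₃ : Type) [AddCommGroup M₁] [Module k M₁] [AddCommGroup M₂] [Module k M₂]
    [AddCommGroup M₃] [Module k M₃]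
    (S₁ : HomModuleOn Ac Bset M₁) (S₂ : HomModuleOn Ac Bset M₂) (S₃ : HomModuleOn Ac Bset M₃)
    (f : M₁ →ₗ[k] M₂) (g : M₂ →ₗ[k] M₃),
    IsHomModuleOnHomR Ac Bset S₁ S₂ f → IsHomModuleOnHomR Ac Bset S₂ S₃ g →
    ∀ (fbar : ((M₁ ⊗[k] A) ⧸ relSubR Ac.mul Ac.aut Bset S₁.act S₁.aut) →ₗ[k]
        ((M₂ ⊗[k] A) ⧸ relSubR Ac.mul Ac.aut Bset S₂.act S₂.aut))
      (gbar : ((M₂ ⊗[k] A) ⧸ relSubR Ac.mul Ac.aut Bset S₂.act S₂.aut) →ₗ[k]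
        ((M₃ ⊗[k] A) ⧸ relSubR Ac.mul Ac.aut Bset S₃.act S₃.aut)),
      fbar ∘ₗ (relSubR Ac.mul Ac.aut Bset S₁.act S₁.aut).mkQ =
        (relSubR Ac.mul Ac.aut Bset S₂.act S₂.aut).mkQ ∘ₗ TensorProduct.map f LinearMap.id →
      gbar ∘ₗ (relSubR Ac.mul Ac.aut Bset S₂.act S₂.aut).mkQ =
        (relSubR Ac.mul Ac.aut Bset S₃.act S₃.aut).mkQ ∘ₗ TensorProduct.map g LinearMap.id →
      (LinearMap.range f = LinearMap.ker g ↔ LinearMap.range fbar = LinearMap.ker gbar)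

/-- `A` is faithfully flat as a right `B`-Hom-module: the induced functor `A ⊗_B −`
on left `B`-Hom-modules preserves and reflects exactness. -/
def FaithfullyFlatRightOf {Hb : MonoidalHomBialgebra k H} (Ac : HomComoduleAlgebra Hb A)
    (Bset : Set A) : Prop :=
  ∀ (M₁ M₂ M₃ : Type) [AddCommGroup M₁] [Module k M₁] [AddCommGroup M₂] [Module k M₂]
    [AddCommGroup M₃] [Module k M₃]
    (S₁ : HomLeftModuleOn Ac Bset M₁) (S₂ : HomLeftModuleOn Ac Bset M₂)
    (S₃ : HomLeftModuleOn Ac Bset M₃)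
    (f : M₁ →ₗ[k] M₂) (g : M₂ →ₗ[k] M₃),
    IsHomModuleOnHomL Ac Bset S₁ S₂ f → IsHomModuleOnHomL Ac Bset S₂ S₃ g →
    ∀ (fbar : ((A ⊗[k] M₁) ⧸ relSubL Ac.mul Ac.aut Bset S₁.act S₁.aut) →ₗ[k]
        ((A ⊗[k] M₂) ⧸ relSubL Ac.mul Ac.aut Bset S₂.act S₂.aut))
      (gbar : ((A ⊗[k] M₂) ⧸ relSubL Ac.mul Ac.aut Bset S₂.act S₂.aut) →ₗ[k]
        ((A ⊗[k] M₃) ⧸ relSubL Ac.mul Ac.aut Bset S₃.act S₃.aut)),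
      fbar ∘ₗ (relSubL Ac.mul Ac.aut Bset S₁.act S₁.aut).mkQ =
        (relSubL Ac.mul Ac.aut Bset S₂.act S₂.aut).mkQ ∘ₗ TensorProduct.map LinearMap.id f →
      gbar ∘ₗ (relSubL Ac.mul Ac.aut Bset S₂.act S₂.aut).mkQ =
        (relSubL Ac.mul Ac.aut Bset S₃.act S₃.aut).mkQ ∘ₗ TensorProduct.map LinearMap.id g →
      (LinearMap.range f = LinearMap.ker g ↔ LinearMap.range fbar = LinearMap.ker gbar)

/-- `A` is flat as a left `B`-Hom-module: `− ⊗_B A` preserves exactness. -/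
def FlatLeftOf {Hb : MonoidalHomBialgebra k H} (Ac : HomComoduleAlgebra Hb A)
    (Bset : Set A) : Prop :=
  ∀ (M₁ M₂ M₃ : Type) [AddCommGroup M₁] [Module k M₁] [AddCommGroup M₂] [Module k M₂]
    [AddCommGroup M₃] [Module k M₃]
    (S₁ : HomModuleOn Ac Bset M₁) (S₂ : HomModuleOn Ac Bset M₂) (S₃ : HomModuleOn Ac Bset M₃)
    (f : M₁ →ₗ[k] M₂) (g : M₂ →ₗ[k] M₃),
    IsHomModuleOnHomR Ac Bset S₁ S₂ f → IsHomModuleOnHomR Ac Bset S₂ S₃ g →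
    ∀ (fbar : ((M₁ ⊗[k] A) ⧸ relSubR Ac.mul Ac.aut Bset S₁.act S₁.aut) →ₗ[k]
        ((M₂ ⊗[k] A) ⧸ relSubR Ac.mul Ac.aut Bset S₂.act S₂.aut))
      (gbar : ((M₂ ⊗[k] A) ⧸ relSubR Ac.mul Ac.aut Bset S₂.act S₂.aut) →ₗ[k]
        ((M₃ ⊗[k] A) ⧸ relSubR Ac.mul Ac.aut Bset S₃.act S₃.aut)),
      fbar ∘ₗ (relSubR Ac.mul Ac.aut Bset S₁.act S₁.aut).mkQ =
        (relSubR Ac.mul Ac.aut Bset S₂.act S₂.aut).mkQ ∘ₗ TensorProduct.map f LinearMap.id →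
      gbar ∘ₗ (relSubR Ac.mul Ac.aut Bset S₂.act S₂.aut).mkQ =
        (relSubR Ac.mul Ac.aut Bset S₃.act S₃.aut).mkQ ∘ₗ TensorProduct.map g LinearMap.id →
      (LinearMap.range f = LinearMap.ker g → LinearMap.range fbar = LinearMap.ker gbar)

end

/-!
Replacing the structure maps of the Hom-objects by `a ⊗ b ↦ β⁻¹(a b)`, `h ↦ Δ(α h)`,
`n ⊗ a ↦ ν⁻¹(n · a)` and `n ↦ ρ(ν n)` turns them into an ordinary Hopf algebra, comodule algebra and
relative Hopf modules, with the same coinvariants, the same Galois map and, up to the automorphisms,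
the same unit and counit. In the ordinary setting:

* `a ↦ a₀ φ(S a₁)` is a left `B`-linear projection of `A` onto `B = A^{co H}`, and the map it
  induces on `M ⊗_B A` inverts the unit.
* Since `k` is a field, `h ↦ 1 ⊗ h` lifts to a linear map `σ : H → A ⊗ A` through the surjective
  Galois map. Composing with `a ⊗ h ↦ a₀ ⊗ a₁ S(h)`, one finds that the second Galois map
  `a ⊗ b ↦ a₀ b ⊗ a₁` sends `σ h` to `1 ⊗ S h`. With `σ h = ∑ c ⊗ d`, the inverse of the counit is
  `n ↦ n₀ φ(S(n₁) S⁻¹(c₁)) c₀ ⊗_B d`, where `c ⊗ d` stands for `σ n₂`: the colinearity of `φ` makes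
  the first factor coinvariant.
-/

noncomputable section

namespace RelativeHopf

open Coalgebra HopfAlgebra LinearMap

section Coaction

variable {k H N U V : Type*} [CommRing k] [AddCommGroup H] [Module k H] [Coalgebra k H]
  [AddCommGroup N] [Module k N] [AddCommGroup U] [Module k U] [AddCommGroup V] [Module k V]

/-- A right `H`-comodule structure on `N`, as a predicate on the structure map. -/
structure IsRightCoaction (ρ : N →ₗ[k] N ⊗[k] H) : Prop where
  coassoc : ∀ n, TensorProduct.assoc k N H H (ρ.rTensor H (ρ n)) = comul.lTensor N (ρ n)
  lTensor_counit : ∀ n, counit.lTensor N (ρ n) = n ⊗ₜ[k] 1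

theorem isRightCoaction_comul : IsRightCoaction (comul : H →ₗ[k] H ⊗[k] H) where
  coassoc := coassoc_apply
  lTensor_counit := lTensor_counit_comul

namespace IsRightCoaction

variable {ρ : N →ₗ[k] N ⊗[k] H}

theorem lTensor_assoc_rTensor (hρ : IsRightCoaction ρ) {m : H ⊗[k] H →ₗ[k] U} {u : U}
    (hm : ∀ x, m (comul x) = counit (R := k) x • u) (n : N) :
    m.lTensor N (TensorProduct.assoc k N H H (ρ.rTensor H (ρ n))) = n ⊗ₜ u := by
  have hm' : m ∘ₗ comul = toSpanSingleton k U u ∘ₗ counit := LinearMap.ext hm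
  rw [hρ.coassoc, ← lTensor_comp_apply, hm', lTensor_comp_apply, hρ.lTensor_counit]
  simp

theorem map_comul (hρ : IsRightCoaction ρ) (n : N) :
    TensorProduct.map ρ comul (ρ n) =
      TensorProduct.assoc k (N ⊗[k] H) H H ((ρ.rTensor H ∘ₗ ρ).rTensor H (ρ n)) := by
  rw [← rTensor_comp_lTensor, comp_apply, ← hρ.coassoc, rTensor_tensor, rTensor_comp_apply]
  simp only [comp_apply, LinearEquiv.coe_coe, LinearEquiv.symm_apply_apply]

/-- In Sweedler notation: a map of `n₀ ⊗ n₁ ⊗ n₂ ⊗ n₃` which depends on `n₁ ⊗ n₂` only through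
`m (n₁ ⊗ n₂) = ε(n₁) u` is a map of `n₀ ⊗ n₁`. -/
theorem contract_middle (hρ : IsRightCoaction ρ) {m : H ⊗[k] H →ₗ[k] U} {u : U}
    (hm : ∀ x, m (comul x) = counit (R := k) x • u)
    (F : (N ⊗[k] H) ⊗[k] (H ⊗[k] H) →ₗ[k] V) (G : (N ⊗[k] U) ⊗[k] H →ₗ[k] V)
    (hFG : ∀ n x y z, F ((n ⊗ₜ x) ⊗ₜ (y ⊗ₜ z)) = G ((n ⊗ₜ m (x ⊗ₜ y)) ⊗ₜ z)) (n : N) :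
    F (TensorProduct.map ρ comul (ρ n)) =
      G (((TensorProduct.mk k N U).flip u).rTensor H (ρ n)) := by
  have hF : F ∘ₗ (TensorProduct.assoc k (N ⊗[k] H) H H).toLinearMap =
      G ∘ₗ (m.lTensor N ∘ₗ (TensorProduct.assoc k N H H).toLinearMap).rTensor H := by
    ext n x y z
    simpa using hFG n x y z
  have hcontract : m.lTensor N ∘ₗ (TensorProduct.assoc k N H H).toLinearMap ∘ₗ
      ρ.rTensor H ∘ₗ ρ = (TensorProduct.mk k N U).flip u :=
    LinearMap.ext (hρ.lTensor_assoc_rTensor hm)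
  rw [hρ.map_comul]
  refine (LinearMap.congr_fun hF _).trans ?_
  rw [comp_apply, ← rTensor_comp_apply, comp_assoc, hcontract]

end IsRightCoaction

end Coaction

section Antipode

variable {k H : Type*} [CommRing k] [Ring H] [HopfAlgebra k H]

theorem mul_rTensor_antipode_comul (x : H) :
    (mul' k H ∘ₗ (antipode k).rTensor H) (comul x) = counit (R := k) x • (1 : H) := by
  rw [comp_apply, mul_antipode_rTensor_comul_apply, Algebra.algebraMap_eq_smul_one]

theorem mul_lTensor_antipode_comul (x : H) :
    (mul' k H ∘ₗ (antipode k).lTensor H) (comul x) = counit (R := k) x • (1 : H) := by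
  rw [comp_apply, mul_antipode_lTensor_comul_apply, Algebra.algebraMap_eq_smul_one]

theorem comul_antipode (x : H) : comul (R := k) (antipode k x) =
    TensorProduct.comm k H H (TensorProduct.map (antipode k) (antipode k) (comul x)) := by
  let T : H →ₗ[k] H ⊗[k] H := (TensorProduct.comm k H H).toLinearMap ∘ₗ
    TensorProduct.map (antipode k) (antipode k) ∘ₗ comul
  let F : (H ⊗[k] H) ⊗[k] (H ⊗[k] H) →ₗ[k] H ⊗[k] H := mul' k (H ⊗[k] H) ∘ₗ
    ((TensorProduct.comm k H H).toLinearMap ∘ₗ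
      TensorProduct.map (antipode k) (antipode k)).rTensor (H ⊗[k] H)
  let G : (H ⊗[k] H) ⊗[k] H →ₗ[k] H ⊗[k] H := mul' k (H ⊗[k] H) ∘ₗ
    TensorProduct.map (TensorProduct.comm k H H ∘ₗ (antipode k).rTensor H)
      (TensorProduct.mk k H H 1)
  have hleft : WithConv.toConv T * WithConv.toConv comul = 1 := by
    ext y
    have hF : (WithConv.toConv T * WithConv.toConv (comul (R := k) (A := H))).ofConv y =
        F (TensorProduct.map comul comul (comul y)) := by
      simp only [F, T, LinearMap.convMul_def, comp_apply]
      rw [← comp_apply (rTensor _ _), rTensor_comp_map]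
      rfl
    have hG : G ∘ₗ ((TensorProduct.mk k H H).flip 1).rTensor H =
        TensorProduct.mk k H H 1 ∘ₗ mul' k H ∘ₗ (antipode k).rTensor H := by
      ext a b
      simp [G]
    rw [hF, isRightCoaction_comul.contract_middle mul_rTensor_antipode_comul F G
      (fun n x y z => by simp [F, G]), ← comp_apply G, hG, comp_apply,
      mul_rTensor_antipode_comul, convOne_apply, Algebra.algebraMap_eq_smul_one]
    simp [Algebra.TensorProduct.one_def]
  have hright : WithConv.toConv (comul (R := k) (A := H)) *
      WithConv.toConv (comul ∘ₗ antipode k) = 1 := comul_right_inv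
  exact LinearMap.congr_fun (congrArg WithConv.ofConv (left_inv_eq_right_inv hleft hright).symm) x

/-- The linear inverse of a bijective antipode. -/
def inverseAntipode (hS : Function.Bijective (antipode k (A := H))) : H →ₗ[k] H :=
  (LinearEquiv.ofBijective (antipode k) hS).symm

variable (hS : Function.Bijective (antipode k (A := H)))

theorem inverseAntipode_antipode (x : H) : inverseAntipode hS (antipode k x) = x :=
  LinearEquiv.ofBijective_symm_apply_apply (antipode k) x

theorem antipode_inverseAntipode (x : H) : antipode k (inverseAntipode hS x) = x :=
  LinearEquiv.apply_ofBijective_symm_apply (antipode k) x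

theorem comul_inverseAntipode (x : H) : comul (R := k) (inverseAntipode hS x) =
    TensorProduct.comm k H H
      (TensorProduct.map (inverseAntipode hS) (inverseAntipode hS) (comul x)) := by
  have hcancel : TensorProduct.map (inverseAntipode hS) (inverseAntipode hS) ∘ₗ
      TensorProduct.map (antipode k) (antipode k) = (LinearMap.id : H ⊗[k] H →ₗ[k] H ⊗[k] H) := by
    ext a b
    simp [inverseAntipode_antipode]
  have h := comul_antipode (k := k) (inverseAntipode hS x)
  rw [antipode_inverseAntipode] at h
  rw [h, TensorProduct.map_comm, TensorProduct.comm_comm, ← comp_apply (TensorProduct.map _ _),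
    hcancel, id_apply]

theorem mul_comm_lTensor_inverseAntipode_comul (x : H) :
    mul' k H (TensorProduct.comm k H H ((inverseAntipode hS).lTensor H (comul x))) =
      counit (R := k) x • (1 : H) := by
  have hanti : antipode k ∘ₗ mul' k H ∘ₗ (TensorProduct.comm k H H).toLinearMap ∘ₗ
      (inverseAntipode hS).lTensor H = mul' k H ∘ₗ (antipode k).rTensor H := by
    ext a b
    simp [antipode_mul_antidistrib, antipode_inverseAntipode]
  apply hS.injective
  refine (LinearMap.congr_fun hanti (comul x)).trans ?_
  rw [mul_rTensor_antipode_comul, map_smul, antipode_one]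

end Antipode

section Coinvariants

variable {k H A N : Type*} [CommRing k] [Ring H] [Algebra k H] [Ring A] [Algebra k A]
  [AddCommGroup N] [Module k N]

/-- The `H`-coinvariants `N^{co H}` of a coaction on `N`. -/
def coinvariants (ρ : N →ₗ[k] N ⊗[k] H) : Submodule k N :=
  LinearMap.eqLocus ρ ((TensorProduct.mk k N H).flip 1)

theorem mem_coinvariants {ρ : N →ₗ[k] N ⊗[k] H} {n : N} : n ∈ coinvariants ρ ↔ ρ n = n ⊗ₜ 1 :=
  Iff.rfl

/-- The subalgebra `A^{co H}` of coinvariants of an `H`-comodule algebra `A`. -/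
def coinvariantSubalgebra (ρA : A →ₐ[k] A ⊗[k] H) : Subalgebra k A :=
  AlgHom.equalizer ρA Algebra.TensorProduct.includeLeft

theorem mem_coinvariantSubalgebra {ρA : A →ₐ[k] A ⊗[k] H} {a : A} :
    a ∈ coinvariantSubalgebra ρA ↔ ρA a = a ⊗ₜ 1 :=
  Iff.rfl

theorem map₂_mul (x y : A ⊗[k] H) :
    TensorProduct.map₂ (LinearMap.mul k A) (LinearMap.mul k H) x y = x * y := by
  have h : TensorProduct.map₂ (LinearMap.mul k A) (LinearMap.mul k H) =
      LinearMap.mul k (A ⊗[k] H) := by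
    ext
    simp
  exact LinearMap.congr_fun₂ h x y

end Coinvariants

section RelativeHopfModule

variable {k H A N : Type*} [CommRing k] [Ring H] [Bialgebra k H] [Ring A] [Algebra k A]
  [AddCommGroup N] [Module k N]

/-- A right `A`-module structure on `N`, as a predicate on the bilinear action map. -/
structure IsRightAction (act : N →ₗ[k] A →ₗ[k] N) : Prop where
  act_act : ∀ n a b, act (act n a) b = act n (a * b)
  act_one : ∀ n, act n 1 = n

/-- A relative `(H, A)`-Hopf module structure on `N`, for an algebra `A` with coaction `ρA`: a right
`A`-action and a right `H`-coaction with `ρ (n · a) = n₀ · a₀ ⊗ n₁ a₁`. -/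
structure IsRelativeHopfModule (ρA : A →ₐ[k] A ⊗[k] H) (act : N →ₗ[k] A →ₗ[k] N)
    (ρ : N →ₗ[k] N ⊗[k] H) : Prop extends IsRightCoaction ρ, IsRightAction act where
  coact_act : ∀ n a, ρ (act n a) = TensorProduct.map₂ act (LinearMap.mul k H) (ρ n) (ρA a)

/-- Right `H`-colinearity of a map `g : H → A` into a comodule algebra. -/
def IsColinear (ρA : A →ₐ[k] A ⊗[k] H) (g : H →ₗ[k] A) : Prop :=
  ∀ h, ρA (g h) = g.rTensor H (comul h)

variable {ρA : A →ₐ[k] A ⊗[k] H} {act : N →ₗ[k] A →ₗ[k] N} {ρ : N →ₗ[k] N ⊗[k] H}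

theorem isRelativeHopfModule_self (hA : IsRightCoaction ρA.toLinearMap) :
    IsRelativeHopfModule ρA (LinearMap.mul k A) ρA.toLinearMap where
  __ := hA
  act_act := mul_assoc
  act_one := mul_one
  coact_act a b := by rw [map₂_mul]; exact map_mul ρA a b

namespace IsRelativeHopfModule

theorem coact_act_of_mem_coinvariants (hN : IsRelativeHopfModule ρA act ρ) {m : N}
    (hm : m ∈ coinvariants ρ) (a : A) : ρ (act m a) = (act m).rTensor H (ρA a) := by
  have h : TensorProduct.map₂ act (LinearMap.mul k H) (m ⊗ₜ 1) = (act m).rTensor H := by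
    ext
    simp
  rw [hN.coact_act, mem_coinvariants.mp hm, h]

theorem act_mem_coinvariants (hN : IsRelativeHopfModule ρA act ρ) {m : N}
    (hm : m ∈ coinvariants ρ) {b : A} (hb : b ∈ coinvariantSubalgebra ρA) :
    act m b ∈ coinvariants ρ := by
  rw [mem_coinvariants, hN.coact_act_of_mem_coinvariants hm, mem_coinvariantSubalgebra.mp hb,
    rTensor_tmul]

end IsRelativeHopfModule

end RelativeHopfModule

section Trace

variable {k H A N : Type*} [CommRing k] [Ring H] [HopfAlgebra k H] [Ring A] [Algebra k A]
  [AddCommGroup N] [Module k N]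

/-- The trace `n ↦ n₀ · g (S n₁)` along `g : H → A`, linear in `g`. -/
def trace (act : N →ₗ[k] A →ₗ[k] N) (ρ : N →ₗ[k] N ⊗[k] H) : (H →ₗ[k] A) →ₗ[k] N →ₗ[k] N :=
  LinearMap.mk₂ k (fun g n => TensorProduct.lift act ((g ∘ₗ antipode k).lTensor N (ρ n)))
    (fun g₁ g₂ n => by rw [add_comp, lTensor_add, LinearMap.add_apply, map_add])
    (fun c g n => by rw [smul_comp, lTensor_smul, LinearMap.smul_apply, map_smul])
    (fun g n₁ n₂ => by simp only [map_add])
    (fun c g n => by simp only [map_smul])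

variable {ρA : A →ₐ[k] A ⊗[k] H} {act : N →ₗ[k] A →ₗ[k] N} {ρ : N →ₗ[k] N ⊗[k] H}

theorem trace_apply (g : H →ₗ[k] A) (n : N) :
    trace act ρ g n = TensorProduct.lift act ((g ∘ₗ antipode k).lTensor N (ρ n)) :=
  rfl

namespace IsRelativeHopfModule

theorem trace_mem_coinvariants (hN : IsRelativeHopfModule ρA act ρ) {g : H →ₗ[k] A}
    (hg : IsColinear ρA g) (n : N) : trace act ρ g n ∈ coinvariants ρ := by
  let F : (N ⊗[k] H) ⊗[k] (H ⊗[k] H) →ₗ[k] N ⊗[k] H :=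
    TensorProduct.lift ((TensorProduct.map₂ act (LinearMap.mul k H)).compl₂
      (g.rTensor H ∘ₗ (TensorProduct.comm k H H).toLinearMap ∘ₗ
        TensorProduct.map (antipode k) (antipode k)))
  let G : (N ⊗[k] H) ⊗[k] H →ₗ[k] N ⊗[k] H :=
    TensorProduct.lift ((TensorProduct.map₂ act (LinearMap.mul k H)).compl₂
      ((TensorProduct.mk k A H).flip 1 ∘ₗ g ∘ₗ antipode k))
  have hF : ρ ∘ₗ TensorProduct.lift act ∘ₗ (g ∘ₗ antipode k).lTensor N =
      F ∘ₗ TensorProduct.map ρ comul := by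
    ext n h
    simp [F, hN.coact_act, hg _, comul_antipode]
  have hG : G ∘ₗ ((TensorProduct.mk k N H).flip 1).rTensor H =
      (TensorProduct.mk k N H).flip 1 ∘ₗ TensorProduct.lift act ∘ₗ (g ∘ₗ antipode k).lTensor N := by
    ext n h
    simp [G]
  rw [mem_coinvariants, trace_apply, ← comp_apply (lift act), ← comp_apply ρ, hF, comp_apply,
    hN.contract_middle mul_lTensor_antipode_comul F G (fun n x y z => by simp [F, G]),
    ← comp_apply G, hG]
  rfl

theorem act_trace (hN : IsRelativeHopfModule ρA act ρ) (g : H →ₗ[k] A) (n : N) (a : A) :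
    act (trace act ρ g n) a = trace act ρ (mulRight k a ∘ₗ g) n := by
  have h : act.flip a ∘ₗ TensorProduct.lift act ∘ₗ (g ∘ₗ antipode k).lTensor N =
      TensorProduct.lift act ∘ₗ ((mulRight k a ∘ₗ g) ∘ₗ antipode k).lTensor N := by
    ext m h
    simp [hN.act_act]
  exact LinearMap.congr_fun h (ρ n)

theorem trace_act (hN : IsRelativeHopfModule ρA act ρ) (g : H →ₗ[k] A) {m : N}
    (hm : m ∈ coinvariants ρ) (a : A) :
    trace act ρ g (act m a) = act m (trace (LinearMap.mul k A) ρA.toLinearMap g a) := by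
  have h : TensorProduct.lift act ∘ₗ (g ∘ₗ antipode k).lTensor N ∘ₗ (act m).rTensor H =
      act m ∘ₗ TensorProduct.lift (LinearMap.mul k A) ∘ₗ (g ∘ₗ antipode k).lTensor A := by
    ext b h
    simp [hN.act_act]
  rw [trace_apply, hN.coact_act_of_mem_coinvariants hm]
  exact LinearMap.congr_fun h (ρA a)

end IsRelativeHopfModule

end Trace

section IntegralKernel

variable {k H A : Type*} [CommRing k] [Ring H] [HopfAlgebra k H] [Ring A] [Algebra k A]

/-- The map `a ⊗ x ↦ (h ↦ φ (h · S⁻¹ x) · a)`, which produces colinear maps `H → A` from a colinear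
map `φ` and the elements `ρA c`. -/
def integralKernel (hS : Function.Bijective (antipode k (A := H))) (φ : H →ₗ[k] A) :
    A ⊗[k] H →ₗ[k] H →ₗ[k] A :=
  TensorProduct.lift <| LinearMap.mk₂ k
    (fun a x => mulRight k a ∘ₗ φ ∘ₗ mulRight k (inverseAntipode hS x))
    (fun a b x => by ext; simp [mul_add]) (fun c a x => by ext; simp)
    (fun a x y => by ext; simp [mul_add, add_mul]) (fun c a x => by ext; simp)

variable {hS : Function.Bijective (antipode k (A := H))} {φ : H →ₗ[k] A}
  {ρA : A →ₐ[k] A ⊗[k] H}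

@[simp]
theorem integralKernel_tmul (a : A) (x h : H) :
    integralKernel hS φ (a ⊗ₜ x) h = φ (h * inverseAntipode hS x) * a :=
  rfl

theorem mulRight_comp_integralKernel (w : A ⊗[k] H) (d : A) :
    mulRight k d ∘ₗ integralKernel hS φ w = integralKernel hS φ (w * d ⊗ₜ 1) := by
  induction w with
  | zero => simp
  | tmul a x => ext h; simp [mul_assoc]
  | add w₁ w₂ h₁ h₂ => rw [map_add, comp_add, h₁, h₂, add_mul, map_add]

theorem rTensor_integralKernel_tmul (a : A) (x : H) (w : H ⊗[k] H) :
    (integralKernel hS φ (a ⊗ₜ x)).rTensor H w =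
      φ.rTensor H (w * inverseAntipode hS x ⊗ₜ 1) * a ⊗ₜ 1 := by
  induction w with
  | zero => simp
  | tmul y z => simp
  | add w₁ w₂ h₁ h₂ => simp only [map_add, add_mul, h₁, h₂]

theorem rTensor_mul_tmul_mul_tmul (w : H ⊗[k] H) (s t x : H) (a : A) :
    φ.rTensor H (w * s ⊗ₜ t) * a ⊗ₜ x = φ.rTensor H (w * s ⊗ₜ 1) * a ⊗ₜ (t * x) := by
  induction w with
  | zero => simp
  | tmul y z => simp [mul_assoc]
  | add w₁ w₂ h₁ h₂ => simp only [add_mul, map_add, h₁, h₂]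

theorem isColinear_integralKernel (hA : IsRightCoaction ρA.toLinearMap) (hφ : IsColinear ρA φ)
    (c : A) : IsColinear ρA (integralKernel hS φ (ρA c)) := by
  intro h
  let S' := inverseAntipode hS
  let F : (A ⊗[k] H) ⊗[k] (H ⊗[k] H) →ₗ[k] A ⊗[k] H :=
    TensorProduct.lift ((LinearMap.mul k (A ⊗[k] H)).flip.compl₂
      (φ.rTensor H ∘ₗ mulLeft k (comul h) ∘ₗ (TensorProduct.comm k H H).toLinearMap ∘ₗ
        TensorProduct.map S' S'))
  let G : (A ⊗[k] H) ⊗[k] H →ₗ[k] A ⊗[k] H :=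
    TensorProduct.lift ((LinearMap.mul k (A ⊗[k] H)).flip.compl₂
      (φ.rTensor H ∘ₗ mulLeft k (comul h) ∘ₗ (TensorProduct.mk k H H).flip 1 ∘ₗ S'))
  let m : H ⊗[k] H →ₗ[k] H := mul' k H ∘ₗ (TensorProduct.comm k H H).toLinearMap ∘ₗ S'.lTensor H
  have hF : ρA.toLinearMap ∘ₗ (integralKernel hS φ).flip h =
      F ∘ₗ TensorProduct.map ρA.toLinearMap comul := by
    ext a x
    simp [F, S', hφ _, comul_inverseAntipode]
  have hG : G ∘ₗ ((TensorProduct.mk k A H).flip 1).rTensor H =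
      (rTensorHom H).flip (comul h) ∘ₗ integralKernel hS φ := by
    ext a x
    exact (rTensor_integralKernel_tmul a x (comul h)).symm
  have hFG (a : A) (x y z : H) : F ((a ⊗ₜ x) ⊗ₜ (y ⊗ₜ z)) = G ((a ⊗ₜ m (x ⊗ₜ y)) ⊗ₜ z) :=
    rTensor_mul_tmul_mul_tmul (comul h) (S' z) (S' y) x a
  calc ρA (integralKernel hS φ (ρA c) h)
      = F (TensorProduct.map ρA.toLinearMap comul (ρA c)) := LinearMap.congr_fun hF (ρA c)
    _ = G (((TensorProduct.mk k A H).flip 1).rTensor H (ρA c)) :=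
        hA.contract_middle (mul_comm_lTensor_inverseAntipode_comul hS) F G hFG c
    _ = (integralKernel hS φ (ρA c)).rTensor H (comul h) := LinearMap.congr_fun hG (ρA c)

end IntegralKernel

section GaloisMap

variable {k H A : Type*} [CommRing k] [Ring H] [Ring A] [Algebra k A]

/-- The canonical Galois map `a ⊗ b ↦ a b₀ ⊗ b₁`. -/
def galoisMap [Algebra k H] (ρA : A →ₐ[k] A ⊗[k] H) : A ⊗[k] A →ₗ[k] A ⊗[k] H :=
  TensorProduct.lift ((LinearMap.mul k (A ⊗[k] H)).compl₁₂
    Algebra.TensorProduct.includeLeft.toLinearMap ρA.toLinearMap)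

/-- The second canonical Galois map `a ⊗ b ↦ a₀ b ⊗ a₁`. -/
def galoisMap' [Algebra k H] (ρA : A →ₐ[k] A ⊗[k] H) : A ⊗[k] A →ₗ[k] A ⊗[k] H :=
  TensorProduct.lift ((LinearMap.mul k (A ⊗[k] H)).compl₁₂ ρA.toLinearMap
    Algebra.TensorProduct.includeLeft.toLinearMap)

variable [HopfAlgebra k H]

/-- The map `a ⊗ h ↦ a₀ ⊗ a₁ S(h)` relating the two canonical Galois maps. -/
def galoisTwist (ρA : A →ₐ[k] A ⊗[k] H) : A ⊗[k] H →ₗ[k] A ⊗[k] H :=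
  TensorProduct.lift ((LinearMap.mul k (A ⊗[k] H)).compl₁₂ ρA.toLinearMap
    (Algebra.TensorProduct.includeRight.toLinearMap ∘ₗ antipode k))

variable {ρA : A →ₐ[k] A ⊗[k] H}

theorem galoisTwist_tmul_one_mul (c : A) (w : A ⊗[k] H) :
    galoisTwist ρA (c ⊗ₜ 1 * w) = ρA c * galoisTwist ρA w := by
  induction w with
  | zero => simp
  | tmul a h => simp [galoisTwist, mul_assoc]
  | add w₁ w₂ h₁ h₂ => rw [mul_add, map_add, h₁, h₂, map_add, mul_add]

theorem galoisTwist_coact (hA : IsRightCoaction ρA.toLinearMap) (d : A) :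
    galoisTwist ρA (ρA d) = d ⊗ₜ 1 := by
  have hmul (w : A ⊗[k] H) (h : H) : w * 1 ⊗ₜ antipode k h =
      (mul' k H ∘ₗ (antipode k).lTensor H).lTensor A (TensorProduct.assoc k A H H (w ⊗ₜ h)) := by
    induction w with
    | zero => simp
    | tmul a x => simp
    | add w₁ w₂ h₁ h₂ => rw [add_mul, h₁, h₂, add_tmul, map_add, map_add]
  have htwist : galoisTwist ρA = (mul' k H ∘ₗ (antipode k).lTensor H).lTensor A ∘ₗ
      (TensorProduct.assoc k A H H).toLinearMap ∘ₗ ρA.toLinearMap.rTensor H := by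
    ext a h
    simpa [galoisTwist] using hmul (ρA a) h
  rw [htwist]
  exact hA.lTensor_assoc_rTensor mul_lTensor_antipode_comul d

theorem galoisTwist_galoisMap (hA : IsRightCoaction ρA.toLinearMap) (z : A ⊗[k] A) :
    galoisTwist ρA (galoisMap ρA z) = galoisMap' ρA z := by
  have h : galoisTwist ρA ∘ₗ galoisMap ρA = galoisMap' ρA := by
    ext c d
    exact (galoisTwist_tmul_one_mul c (ρA d)).trans (by rw [galoisTwist_coact hA]; rfl)
  exact LinearMap.congr_fun h z

theorem exists_galoisMap'_eq_tmul_antipode [Module.Projective k H]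
    (hA : IsRightCoaction ρA.toLinearMap) (hcan : Function.Surjective (galoisMap ρA)) :
    ∃ σ : H →ₗ[k] A ⊗[k] A, ∀ h, galoisMap' ρA (σ h) = 1 ⊗ₜ antipode k h := by
  obtain ⟨σ, hσ⟩ :=
    Module.projective_lifting_property (galoisMap ρA) (TensorProduct.mk k A H 1) hcan
  refine ⟨σ, fun h => ?_⟩
  rw [← galoisTwist_galoisMap hA, ← comp_apply (galoisMap ρA), hσ]
  simp [galoisTwist]

end GaloisMap

section BalancedTensor

variable {k A M : Type*} [CommRing k] [Ring A] [Algebra k A] [AddCommGroup M] [Module k M]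
  {B : Subalgebra k A}

/-- The relations `m · b ⊗ a = m ⊗ b a` defining `M ⊗_B A` as a quotient of `M ⊗ A`. -/
def balancedRelations (act : M →ₗ[k] B →ₗ[k] M) : Submodule k (M ⊗[k] A) :=
  Submodule.span k
    {x | ∃ (m : M) (b : B) (a : A), x = act m b ⊗ₜ[k] a - m ⊗ₜ[k] ((b : A) * a)}

/-- The tensor product `M ⊗_B A` of a right `B`-module `M` with an algebra `A ⊇ B`. -/
abbrev BalancedTensor (act : M →ₗ[k] B →ₗ[k] M) : Type _ :=
  (M ⊗[k] A) ⧸ balancedRelations act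

theorem act_tmul_sub_mem_balancedRelations (act : M →ₗ[k] B →ₗ[k] M) (m : M) (b : B) (a : A) :
    act m b ⊗ₜ[k] a - m ⊗ₜ[k] ((b : A) * a) ∈ balancedRelations act :=
  Submodule.subset_span ⟨m, b, a, rfl⟩

theorem balancedRelations_le_iff {act : M →ₗ[k] B →ₗ[k] M} {K : Submodule k (M ⊗[k] A)} :
    balancedRelations act ≤ K ↔
      ∀ (m : M) (b : B) (a : A), act m b ⊗ₜ[k] a - m ⊗ₜ[k] ((b : A) * a) ∈ K := by
  refine ⟨fun h m b a => h (act_tmul_sub_mem_balancedRelations act m b a), fun h => ?_⟩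
  rw [balancedRelations, Submodule.span_le]
  rintro _ ⟨m, b, a, rfl⟩
  exact h m b a

theorem mkQ_act_tmul (act : M →ₗ[k] B →ₗ[k] M) (m : M) (b : B) (a : A) :
    (balancedRelations act).mkQ (act m b ⊗ₜ a) =
      (balancedRelations act).mkQ (m ⊗ₜ ((b : A) * a)) :=
  (Submodule.Quotient.eq _).mpr (act_tmul_sub_mem_balancedRelations act m b a)

end BalancedTensor

section CounitLift

variable {k H A N : Type*} [CommRing k] [Ring H] [Ring A] [Algebra k A]
  [AddCommGroup N] [Module k N]

namespace IsRelativeHopfModule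

/-- The map `N^{co H} ⊗ A → N`, `n ⊗ a ↦ n · a`, which induces the counit. -/
def counitLift [Algebra k H] (act : N →ₗ[k] A →ₗ[k] N) (ρ : N →ₗ[k] N ⊗[k] H) :
    coinvariants ρ ⊗[k] A →ₗ[k] N :=
  TensorProduct.lift (act ∘ₗ (coinvariants ρ).subtype)

variable [Bialgebra k H] {ρA : A →ₐ[k] A ⊗[k] H} {act : N →ₗ[k] A →ₗ[k] N} {ρ : N →ₗ[k] N ⊗[k] H}

/-- The action of `A^{co H}` on the coinvariants of a relative Hopf module. -/
def coinvariantsAct (hN : IsRelativeHopfModule ρA act ρ) :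
    coinvariants ρ →ₗ[k] coinvariantSubalgebra ρA →ₗ[k] coinvariants ρ :=
  LinearMap.mk₂ k (fun n b => ⟨act n b, hN.act_mem_coinvariants n.2 b.2⟩)
    (fun _ _ _ => Subtype.ext (by simp)) (fun _ _ _ => Subtype.ext (by simp))
    (fun _ _ _ => Subtype.ext (by simp)) (fun _ _ _ => Subtype.ext (by simp))

theorem balancedRelations_le_ker_counitLift (hN : IsRelativeHopfModule ρA act ρ) :
    balancedRelations hN.coinvariantsAct ≤
      LinearMap.ker (counitLift act ρ) := by
  rw [balancedRelations_le_iff]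
  intro m b a
  simp [counitLift, coinvariantsAct, hN.act_act]

end IsRelativeHopfModule

end CounitLift

section Counit

variable {k H A N : Type*} [CommRing k] [Ring H] [HopfAlgebra k H] [Ring A] [Algebra k A]
  [AddCommGroup N] [Module k N]
  {ρA : A →ₐ[k] A ⊗[k] H} {act : N →ₗ[k] A →ₗ[k] N} {ρ : N →ₗ[k] N ⊗[k] H} {φ : H →ₗ[k] A}

namespace IsRelativeHopfModule

/-- The map `N ⊗ A → N^{co H}`, `n ⊗ c ↦ n₀ · φ (S(n₁) S⁻¹(c₁)) c₀`. -/
def average (hN : IsRelativeHopfModule ρA act ρ) (hA : IsRightCoaction ρA.toLinearMap)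
    (hS : Function.Bijective (antipode k (A := H))) (hφ : IsColinear ρA φ) :
    N ⊗[k] A →ₗ[k] coinvariants ρ :=
  TensorProduct.lift <| LinearMap.mk₂ k
    (fun n c => ⟨trace act ρ (integralKernel hS φ (ρA c)) n,
      hN.trace_mem_coinvariants (isColinear_integralKernel hA hφ c) n⟩)
    (fun n₁ n₂ c => Subtype.ext (map_add _ n₁ n₂)) (fun r n c => Subtype.ext (map_smul _ r n))
    (fun n c₁ c₂ => Subtype.ext (by simp)) (fun r n c => Subtype.ext (by simp))

variable (hN : IsRelativeHopfModule ρA act ρ) (hA : IsRightCoaction ρA.toLinearMap)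
  (hS : Function.Bijective (antipode k (A := H))) (hφ : IsColinear ρA φ)

/-- The map `n ↦ n₀ ⊗ σ n₁` followed by averaging the first two legs; if `σ` lifts `h ↦ 1 ⊗ h`
through the Galois map, this induces the inverse of the counit `N^{co H} ⊗_B A → N`. -/
def counitInverse (σ : H →ₗ[k] A ⊗[k] A) : N →ₗ[k] coinvariants ρ ⊗[k] A :=
  (hN.average hA hS hφ).rTensor A ∘ₗ (TensorProduct.assoc k N A A).symm.toLinearMap ∘ₗ
    σ.lTensor N ∘ₗ ρ

theorem counitLift_average (n : N) (z : A ⊗[k] A) :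
    counitLift act ρ ((hN.average hA hS hφ).rTensor A ((TensorProduct.assoc k N A A).symm
      (n ⊗ₜ z))) = trace act ρ (integralKernel hS φ (galoisMap' ρA z)) n := by
  induction z with
  | zero => simp
  | tmul c d =>
    simp only [TensorProduct.assoc_symm_tmul, rTensor_tmul]
    refine (hN.act_trace _ n d).trans ?_
    rw [mulRight_comp_integralKernel]
    rfl
  | add z₁ z₂ h₁ h₂ => simp only [tmul_add, map_add, h₁, h₂, LinearMap.add_apply]

theorem counitLift_counitInverse (hφ_one : φ 1 = 1) {σ : H →ₗ[k] A ⊗[k] A}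
    (hσ : ∀ h, galoisMap' ρA (σ h) = 1 ⊗ₜ antipode k h) (n : N) :
    counitLift act ρ (hN.counitInverse hA hS hφ σ n) = n := by
  let m : H ⊗[k] H →ₗ[k] H := mul' k H ∘ₗ (antipode k).rTensor H
  have htrace (h : H) (w : N ⊗[k] H) :
      TensorProduct.lift act
          ((integralKernel hS φ (1 ⊗ₜ antipode k h) ∘ₗ antipode k).lTensor N w) =
        TensorProduct.lift act
          (φ.lTensor N (m.lTensor N (TensorProduct.assoc k N H H (w ⊗ₜ h)))) := by
    induction w with
    | zero => simp
    | tmul n x => simp [m, inverseAntipode_antipode]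
    | add w₁ w₂ h₁ h₂ => simp only [map_add, add_tmul, h₁, h₂]
  have hlift : counitLift act ρ ∘ₗ (hN.average hA hS hφ).rTensor A ∘ₗ
      (TensorProduct.assoc k N A A).symm.toLinearMap ∘ₗ σ.lTensor N =
      TensorProduct.lift act ∘ₗ φ.lTensor N ∘ₗ m.lTensor N ∘ₗ
        (TensorProduct.assoc k N H H).toLinearMap ∘ₗ ρ.rTensor H := by
    ext n h
    exact (hN.counitLift_average hA hS hφ n (σ h)).trans (by rw [hσ]; exact htrace h (ρ n))
  calc counitLift act ρ (hN.counitInverse hA hS hφ σ n)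
      = TensorProduct.lift act (φ.lTensor N (m.lTensor N
          (TensorProduct.assoc k N H H (ρ.rTensor H (ρ n))))) := LinearMap.congr_fun hlift (ρ n)
    _ = n := by rw [hN.lTensor_assoc_rTensor mul_rTensor_antipode_comul]; simp [hφ_one, hN.act_one]

theorem average_act (m : coinvariants ρ) (a c : A) :
    (hN.average hA hS hφ (act m a ⊗ₜ c) : N) =
      act m ((isRelativeHopfModule_self hA).average hA hS hφ (a ⊗ₜ c) : A) :=
  hN.trace_act _ m.2 a

theorem average_act_tmul_sub_mem (m : coinvariants ρ) (a : A) (z : A ⊗[k] A) :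
    (hN.average hA hS hφ).rTensor A ((TensorProduct.assoc k N A A).symm (act m a ⊗ₜ z)) -
      m ⊗ₜ counitLift (LinearMap.mul k A) ρA.toLinearMap
        (((isRelativeHopfModule_self hA).average hA hS hφ).rTensor A
          ((TensorProduct.assoc k A A A).symm (a ⊗ₜ z))) ∈
      balancedRelations hN.coinvariantsAct := by
  induction z with
  | zero => simp
  | tmul c d =>
    let b := (isRelativeHopfModule_self hA).average hA hS hφ (a ⊗ₜ c)
    have hb : hN.average hA hS hφ (act m a ⊗ₜ c) = hN.coinvariantsAct m ⟨b, b.2⟩ :=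
      Subtype.ext (hN.average_act hA hS hφ m a c)
    simp only [TensorProduct.assoc_symm_tmul, rTensor_tmul, hb]
    exact act_tmul_sub_mem_balancedRelations hN.coinvariantsAct m ⟨b, b.2⟩ d
  | add z₁ z₂ h₁ h₂ =>
    simpa only [tmul_add, map_add, add_sub_add_comm] using add_mem h₁ h₂

theorem counitInverse_act (σ : H →ₗ[k] A ⊗[k] A) (m : coinvariants ρ) (a : A) :
    hN.counitInverse hA hS hφ σ (act m a) - m ⊗ₜ counitLift (LinearMap.mul k A) ρA.toLinearMap
      ((isRelativeHopfModule_self hA).counitInverse hA hS hφ σ a) ∈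
        balancedRelations hN.coinvariantsAct := by
  have hmem (w : A ⊗[k] H) : (hN.average hA hS hφ).rTensor A
      ((TensorProduct.assoc k N A A).symm (σ.lTensor N ((act m).rTensor H w))) -
      m ⊗ₜ counitLift (LinearMap.mul k A) ρA.toLinearMap
        (((isRelativeHopfModule_self hA).average hA hS hφ).rTensor A
          ((TensorProduct.assoc k A A A).symm (σ.lTensor A w))) ∈
      balancedRelations hN.coinvariantsAct := by
    induction w with
    | zero => simp
    | tmul b h => exact hN.average_act_tmul_sub_mem hA hS hφ m b (σ h)
    | add w₁ w₂ h₁ h₂ => simpa only [tmul_add, map_add, add_sub_add_comm] using add_mem h₁ h₂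
  have h := hmem (ρA a)
  rwa [← hN.coact_act_of_mem_coinvariants m.2] at h

theorem counitLift_surjective [Module.Projective k H] (hN : IsRelativeHopfModule ρA act ρ)
    (hA : IsRightCoaction ρA.toLinearMap) (hS : Function.Bijective (antipode k (A := H)))
    (hφ : IsColinear ρA φ) (hφ_one : φ 1 = 1) (hcan : Function.Surjective (galoisMap ρA)) :
    Function.Surjective (counitLift act ρ) := by
  obtain ⟨σ, hσ⟩ := exists_galoisMap'_eq_tmul_antipode hA hcan
  intro n
  exact ⟨_, hN.counitLift_counitInverse hA hS hφ hφ_one hσ n⟩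

theorem ker_counitLift [Module.Projective k H] (hN : IsRelativeHopfModule ρA act ρ)
    (hA : IsRightCoaction ρA.toLinearMap) (hS : Function.Bijective (antipode k (A := H)))
    (hφ : IsColinear ρA φ) (hφ_one : φ 1 = 1) (hcan : Function.Surjective (galoisMap ρA)) :
    LinearMap.ker (counitLift act ρ) =
      balancedRelations hN.coinvariantsAct := by
  obtain ⟨σ, hσ⟩ := exists_galoisMap'_eq_tmul_antipode hA hcan
  have hleft (y : coinvariants ρ ⊗[k] A) : hN.counitInverse hA hS hφ σ (counitLift act ρ y) - y ∈
      balancedRelations hN.coinvariantsAct := by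
    induction y with
    | zero => simp
    | tmul m a =>
      have h := hN.counitInverse_act hA hS hφ σ m a
      rwa [(isRelativeHopfModule_self hA).counitLift_counitInverse hA hS hφ hφ_one hσ] at h
    | add y₁ y₂ h₁ h₂ => simpa only [map_add, add_sub_add_comm] using add_mem h₁ h₂
  refine le_antisymm (fun y hy => ?_) hN.balancedRelations_le_ker_counitLift
  simpa only [LinearMap.mem_ker.mp hy, map_zero, zero_sub, neg_mem_iff] using hleft y

end IsRelativeHopfModule

end Counit

section BalancedCoaction

variable {k H A M : Type*} [CommRing k] [Ring H] [Algebra k H] [Ring A] [Algebra k A]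
  [AddCommGroup M] [Module k M] {ρA : A →ₐ[k] A ⊗[k] H}

variable (act : M →ₗ[k] coinvariantSubalgebra ρA →ₗ[k] M)

/-- The coaction `[m ⊗ a] ↦ [m ⊗ a₀] ⊗ a₁` on `M ⊗_B A`, for `B = A^{co H}`. -/
def balancedCoaction : BalancedTensor act →ₗ[k] BalancedTensor act ⊗[k] H :=
  Submodule.liftQ _ ((balancedRelations act).mkQ.rTensor H ∘ₗ
    (TensorProduct.assoc k M A H).symm.toLinearMap ∘ₗ ρA.toLinearMap.lTensor M) <| by
  rw [balancedRelations_le_iff]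
  intro m b a
  have hbalanced (w : A ⊗[k] H) : (balancedRelations act).mkQ.rTensor H
        ((TensorProduct.assoc k M A H).symm (act m b ⊗ₜ w)) =
      (balancedRelations act).mkQ.rTensor H
        ((TensorProduct.assoc k M A H).symm (m ⊗ₜ ((b : A) ⊗ₜ 1 * w))) := by
    induction w with
    | zero => simp
    | tmul a h => simpa using congrArg (· ⊗ₜ[k] h) (mkQ_act_tmul act m b a)
    | add w₁ w₂ h₁ h₂ => simp only [mul_add, tmul_add, map_add, h₁, h₂]
  rw [LinearMap.mem_ker, map_sub, sub_eq_zero]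
  simpa [mem_coinvariantSubalgebra.mp b.2] using hbalanced (ρA a)

/-- The unit `M → (M ⊗_B A)^{co H}`, `m ↦ [m ⊗ 1]`, of the induction-coinvariants adjunction. -/
def balancedUnit : M →ₗ[k] coinvariants (balancedCoaction act) :=
  ((balancedRelations act).mkQ ∘ₗ (TensorProduct.mk k M A).flip 1).codRestrict _ fun m => by
    simp [mem_coinvariants, balancedCoaction, Algebra.TensorProduct.one_def]

theorem coe_balancedUnit (m : M) :
    (balancedUnit act m : BalancedTensor act) = (balancedRelations act).mkQ (m ⊗ₜ 1) :=
  rfl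

/-- The map `[m ⊗ a] ⊗ h ↦ [m ⊗ a g(h)]`. -/
def balancedContraction (g : H →ₗ[k] A) : BalancedTensor act ⊗[k] H →ₗ[k] BalancedTensor act :=
  TensorProduct.lift <| Submodule.liftQ _ (TensorProduct.curry ((balancedRelations act).mkQ ∘ₗ
    (TensorProduct.lift (LinearMap.mul k A) ∘ₗ g.lTensor A).lTensor M ∘ₗ
      (TensorProduct.assoc k M A H).toLinearMap)) <| by
  rw [balancedRelations_le_iff]
  intro m b a
  rw [LinearMap.mem_ker, map_sub, sub_eq_zero]
  ext h
  simpa [mul_assoc] using mkQ_act_tmul act m b (a * g h)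

variable {act}

theorem balancedContraction_tmul_one {g : H →ₗ[k] A} (hg : g 1 = 1) (q : BalancedTensor act) :
    balancedContraction act g (q ⊗ₜ 1) = q := by
  have h : (balancedContraction act g ∘ₗ (TensorProduct.mk k _ H).flip 1) ∘ₗ
      (balancedRelations act).mkQ = (balancedRelations act).mkQ := by
    ext m a
    simp [balancedContraction, hg]
  obtain ⟨y, rfl⟩ := Submodule.mkQ_surjective _ q
  exact LinearMap.congr_fun h y

end BalancedCoaction

section Unit

variable {k H A M : Type*} [CommRing k] [Ring H] [HopfAlgebra k H] [Ring A] [Algebra k A]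
  [AddCommGroup M] [Module k M] {ρA : A →ₐ[k] A ⊗[k] H} {φ : H →ₗ[k] A}

/-- The trace of `φ` on `A`, as a map `A → A^{co H}`. -/
def coinvariantTrace (hA : IsRightCoaction ρA.toLinearMap) (hφ : IsColinear ρA φ) :
    A →ₗ[k] coinvariantSubalgebra ρA :=
  (trace (LinearMap.mul k A) ρA.toLinearMap φ).codRestrict
    (Subalgebra.toSubmodule (coinvariantSubalgebra ρA))
    ((isRelativeHopfModule_self hA).trace_mem_coinvariants hφ)

variable (hA : IsRightCoaction ρA.toLinearMap) (hφ : IsColinear ρA φ)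

theorem coinvariantTrace_mul (b : coinvariantSubalgebra ρA) (a : A) :
    coinvariantTrace hA hφ (b * a) = b * coinvariantTrace hA hφ a :=
  Subtype.ext ((isRelativeHopfModule_self hA).trace_act φ b.2 a)

theorem coinvariantTrace_one (hφ_one : φ 1 = 1) : coinvariantTrace hA hφ 1 = 1 := by
  apply Subtype.ext
  change trace (LinearMap.mul k A) ρA.toLinearMap φ 1 = 1
  simp [trace_apply, Algebra.TensorProduct.one_def, hφ_one]

variable (act : M →ₗ[k] coinvariantSubalgebra ρA →ₗ[k] M)

/-- The map `M ⊗ A → M`, `m ⊗ a ↦ m · t a` for the trace `t`, which induces the inverse of the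
unit. -/
def balancedTrace : M ⊗[k] A →ₗ[k] M :=
  TensorProduct.lift act ∘ₗ (coinvariantTrace hA hφ).lTensor M

variable {act}

theorem balancedRelations_le_ker_balancedTrace (hact : IsRightAction act) :
    balancedRelations act ≤ LinearMap.ker (balancedTrace hA hφ act) := by
  rw [balancedRelations_le_iff]
  intro m b a
  simp [balancedTrace, hact.act_act, coinvariantTrace_mul]

theorem balancedUnit_injective (hA : IsRightCoaction ρA.toLinearMap) (hφ : IsColinear ρA φ)
    (hφ_one : φ 1 = 1) (hact : IsRightAction act) : Function.Injective (balancedUnit act) := by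
  have hleft (m : M) : (balancedRelations act).liftQ (balancedTrace hA hφ act)
      (balancedRelations_le_ker_balancedTrace hA hφ hact) (balancedUnit act m) = m := by
    rw [coe_balancedUnit, Submodule.mkQ_apply, Submodule.liftQ_apply]
    simp [balancedTrace, coinvariantTrace_one hA hφ hφ_one, hact.act_one]
  intro m m' h
  rw [← hleft m, h, hleft m']

theorem balancedUnit_balancedTrace (y : M ⊗[k] A) :
    (balancedUnit act (balancedTrace hA hφ act y) : BalancedTensor act) =
      (balancedRelations act).mkQ
        ((trace (LinearMap.mul k A) ρA.toLinearMap φ).lTensor M y) := by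
  induction y with
  | zero => simp
  | tmul m a =>
    refine (mkQ_act_tmul act m (coinvariantTrace hA hφ a) 1).trans ?_
    rw [mul_one]
    rfl
  | add y₁ y₂ h₁ h₂ => simp only [map_add, Submodule.coe_add, h₁, h₂]

theorem balancedContraction_balancedCoaction (g : H →ₗ[k] A) (y : M ⊗[k] A) :
    balancedContraction act (g ∘ₗ antipode k)
        (balancedCoaction act ((balancedRelations act).mkQ y)) =
      (balancedRelations act).mkQ
        ((trace (LinearMap.mul k A) ρA.toLinearMap g).lTensor M y) := by
  have h : balancedContraction act (g ∘ₗ antipode k) ∘ₗ (balancedRelations act).mkQ.rTensor H ∘ₗ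
      (TensorProduct.assoc k M A H).symm.toLinearMap = (balancedRelations act).mkQ ∘ₗ
        (TensorProduct.lift (LinearMap.mul k A) ∘ₗ (g ∘ₗ antipode k).lTensor A).lTensor M := by
    ext m a h
    rfl
  refine (LinearMap.congr_fun h (ρA.toLinearMap.lTensor M y)).trans ?_
  rw [comp_apply, ← lTensor_comp_apply]
  rfl

/-- A coinvariant `[y]` is fixed by the contraction along `φ ∘ S`, whereas contracting its coaction
produces the trace of `y`, which lies in the image of the unit. -/
theorem balancedUnit_surjective (hA : IsRightCoaction ρA.toLinearMap) (hφ : IsColinear ρA φ)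
    (hφ_one : φ 1 = 1) : Function.Surjective (balancedUnit act) := by
  rintro ⟨q, hq⟩
  obtain ⟨y, rfl⟩ := Submodule.mkQ_surjective _ q
  refine ⟨balancedTrace hA hφ act y, Subtype.ext ?_⟩
  rw [balancedUnit_balancedTrace, ← balancedContraction_balancedCoaction, mem_coinvariants.mp hq]
  exact balancedContraction_tmul_one (by simp [hφ_one]) _

end Unit

end RelativeHopf

section Untwisting

open RelativeHopf

variable {k : Type} [Field k] {H : Type} [AddCommGroup H] [Module k H]
  {A : Type} [AddCommGroup A] [Module k A] {N : Type} [AddCommGroup N] [Module k N]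

/-- A monoidal Hom-bialgebra as a Hom-comodule algebra over itself. -/
def MonoidalHomBialgebra.regular (Hb : MonoidalHomBialgebra k H) : HomComoduleAlgebra Hb H where
  mul := Hb.mul
  one := Hb.one
  aut := Hb.aut
  hom_assoc := Hb.hom_assoc
  mulOne := Hb.mulOne
  oneMul := Hb.oneMul
  aut_mul := Hb.aut_mul
  aut_one := Hb.aut_one
  coact := Hb.comul
  coassoc := Hb.coassoc.symm
  counit := Hb.counit_right
  coact_aut := Hb.comul_aut
  coact_mul := Hb.comul_mul
  coact_one := Hb.comul_one

variable {Hb : MonoidalHomBialgebra k H} {Ac : HomComoduleAlgebra Hb A}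

/-- A Hom-comodule algebra as a Hom-Hopf module over itself. -/
def HomComoduleAlgebra.regular (Ac : HomComoduleAlgebra Hb A) : HomHopfModule Ac A where
  act := Ac.mul
  aut := Ac.aut
  act_act a b c := (Ac.hom_assoc a b c).symm
  act_one := Ac.mulOne
  aut_act := Ac.aut_mul
  coact := Ac.coact
  coassoc := Ac.coassoc
  counit := Ac.counit
  coact_aut := Ac.coact_aut
  compat := Ac.coact_mul

namespace HomHopfModule

variable (P : HomHopfModule Ac N)

/-- The action `n ⊗ a ↦ ν⁻¹(n · a)`, which is associative in the usual sense. -/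
def untwistedAct : N →ₗ[k] A →ₗ[k] N :=
  P.act.compr₂ P.aut.symm.toLinearMap

/-- The coaction `n ↦ ρ(ν(n))`, which is coassociative in the usual sense. -/
def untwistedCoact : N →ₗ[k] N ⊗[k] H :=
  P.coact ∘ₗ P.aut.toLinearMap

theorem untwistedAct_apply (n : N) (a : A) : P.untwistedAct n a = P.aut.symm (P.act n a) :=
  rfl

theorem untwistedAct_eq_act_symm (n : N) (a : A) :
    P.untwistedAct n a = P.act (P.aut.symm n) (Ac.aut.symm a) := by
  rw [untwistedAct_apply, LinearEquiv.symm_apply_eq, P.aut_act, LinearEquiv.apply_symm_apply,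
    LinearEquiv.apply_symm_apply]

theorem untwistedAct_aut_aut (n : N) (a : A) : P.untwistedAct (P.aut n) (Ac.aut a) = P.act n a := by
  simp only [untwistedAct_eq_act_symm, LinearEquiv.symm_apply_apply]

theorem untwistedCoact_eq_map_coact (n : N) :
    P.untwistedCoact n = TensorProduct.map P.aut.toLinearMap Hb.aut.toLinearMap (P.coact n) :=
  LinearMap.congr_fun P.coact_aut n

theorem untwistedAct_untwistedAct (n : N) (a b : A) :
    P.untwistedAct (P.untwistedAct n a) b = P.untwistedAct n (Ac.regular.untwistedAct a b) := by
  have h := P.act_act (P.aut.symm n) (Ac.aut.symm a) (Ac.aut.symm b)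
  simp only [LinearEquiv.apply_symm_apply] at h
  rw [P.untwistedAct_eq_act_symm n a, Ac.regular.untwistedAct_eq_act_symm, P.untwistedAct_apply,
    P.untwistedAct_apply, h]
  rfl

theorem untwistedAct_one (n : N) : P.untwistedAct n Ac.one = n := by
  rw [untwistedAct_apply, P.act_one, LinearEquiv.symm_apply_apply]

theorem coact_act (n : N) (a : A) :
    P.coact (P.act n a) = TensorProduct.map₂ P.act Hb.mul (P.coact n) (Ac.coact a) := by
  refine (LinearMap.congr_fun P.compat (n ⊗ₜ a)).trans ?_
  simp only [LinearMap.comp_apply, TensorProduct.map_tmul, LinearEquiv.coe_coe]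
  generalize P.coact n = u
  generalize Ac.coact a = v
  induction u with
  | zero => simp
  | add u₁ u₂ h₁ h₂ => simp only [map_add, add_tmul, LinearMap.add_apply, h₁, h₂]
  | tmul n h =>
    induction v with
    | zero => simp
    | add v₁ v₂ h₁ h₂ => simp only [map_add, tmul_add, h₁, h₂]
    | tmul a g => simp

theorem map₂_untwistedAct_map_aut (u : N ⊗[k] H) (v : A ⊗[k] H) :
    TensorProduct.map₂ P.untwistedAct Hb.regular.regular.untwistedAct
        (TensorProduct.map P.aut.toLinearMap Hb.aut.toLinearMap u)
        (TensorProduct.map Ac.aut.toLinearMap Hb.aut.toLinearMap v) =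
      TensorProduct.map₂ P.act Hb.mul u v := by
  induction u with
  | zero => simp
  | add u₁ u₂ h₁ h₂ => simp only [map_add, LinearMap.add_apply, h₁, h₂]
  | tmul n h =>
    induction v with
    | zero => simp
    | add v₁ v₂ h₁ h₂ => simp only [map_add, h₁, h₂]
    | tmul a g =>
      simp only [TensorProduct.map_tmul, TensorProduct.map₂_apply_tmul, LinearEquiv.coe_coe,
        untwistedAct_aut_aut]
      exact congrArg _ (Hb.regular.regular.untwistedAct_aut_aut h g)

theorem untwistedCoact_untwistedAct (n : N) (a : A) :
    P.untwistedCoact (P.untwistedAct n a) =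
      TensorProduct.map₂ P.untwistedAct Hb.regular.regular.untwistedAct
        (P.untwistedCoact n) (Ac.regular.untwistedCoact a) := by
  rw [P.untwistedCoact_eq_map_coact n, Ac.regular.untwistedCoact_eq_map_coact a]
  refine Eq.trans ?_ (P.map₂_untwistedAct_map_aut _ _).symm
  rw [untwistedAct_apply, untwistedCoact, LinearMap.comp_apply, LinearEquiv.coe_coe,
    LinearEquiv.apply_symm_apply, coact_act]
  rfl

theorem untwistedCoact_comp_aut :
    P.untwistedCoact ∘ₗ P.aut.toLinearMap =
      TensorProduct.map (P.aut.toLinearMap ∘ₗ P.aut.toLinearMap)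
        (Hb.aut.toLinearMap ∘ₗ Hb.aut.toLinearMap) ∘ₗ P.coact := by
  rw [untwistedCoact, P.coact_aut, LinearMap.comp_assoc, P.coact_aut, ← LinearMap.comp_assoc,
    ← TensorProduct.map_comp]

theorem untwistedCoact_coassoc :
    (TensorProduct.assoc k N H H).toLinearMap ∘ₗ
        P.untwistedCoact.rTensor H ∘ₗ P.untwistedCoact =
      Hb.regular.regular.untwistedCoact.lTensor N ∘ₗ P.untwistedCoact := by
  let ν := P.aut.toLinearMap
  let α := Hb.aut.toLinearMap
  have hν : (ν ∘ₗ ν) ∘ₗ P.aut.symm.toLinearMap = ν := by ext; simp [ν]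
  have hα : (α ∘ₗ α) ∘ₗ Hb.aut.symm.toLinearMap = α := by ext; simp [α]
  have hl : P.untwistedCoact.rTensor H ∘ₗ TensorProduct.map ν α =
      TensorProduct.map (TensorProduct.map (ν ∘ₗ ν) (α ∘ₗ α)) (α ∘ₗ α) ∘ₗ
        TensorProduct.map P.coact Hb.aut.symm.toLinearMap := by
    rw [LinearMap.rTensor_comp_map, P.untwistedCoact_comp_aut, ← TensorProduct.map_comp, hα]
  have hr : Hb.regular.regular.untwistedCoact.lTensor N ∘ₗ TensorProduct.map ν α =
      TensorProduct.map (ν ∘ₗ ν) (TensorProduct.map (α ∘ₗ α) (α ∘ₗ α)) ∘ₗ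
        TensorProduct.map P.aut.symm.toLinearMap Hb.comul := by
    rw [LinearMap.lTensor_comp_map, ← TensorProduct.map_comp, hν]
    exact congrArg _ Hb.regular.regular.untwistedCoact_comp_aut
  have hρ : P.untwistedCoact = TensorProduct.map ν α ∘ₗ P.coact := P.coact_aut
  calc _ = (TensorProduct.assoc k N H H).toLinearMap ∘ₗ
          (P.untwistedCoact.rTensor H ∘ₗ TensorProduct.map ν α) ∘ₗ P.coact := by
        nth_rw 2 [hρ]
        rfl
    _ = TensorProduct.map (ν ∘ₗ ν) (TensorProduct.map (α ∘ₗ α) (α ∘ₗ α)) ∘ₗ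
          (TensorProduct.assoc k N H H).toLinearMap ∘ₗ
            TensorProduct.map P.coact Hb.aut.symm.toLinearMap ∘ₗ P.coact := by
        rw [hl]
        exact congrArg (· ∘ₗ TensorProduct.map P.coact Hb.aut.symm.toLinearMap ∘ₗ P.coact)
          (TensorProduct.map_map_comp_assoc_eq _ _ _).symm
    _ = (Hb.regular.regular.untwistedCoact.lTensor N ∘ₗ TensorProduct.map ν α) ∘ₗ P.coact := by
        rw [← P.coassoc, hr, LinearMap.comp_assoc]
    _ = _ := by rw [hρ, LinearMap.comp_assoc]

theorem lTensor_counit_untwistedCoact (n : N) :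
    Hb.counit.lTensor N (P.untwistedCoact n) = n ⊗ₜ 1 := by
  apply (TensorProduct.rid k N).injective
  simpa [LinearMap.lTensor, untwistedCoact] using LinearMap.congr_fun P.counit (P.aut n)

end HomHopfModule

namespace HomComoduleAlgebra

/-- The algebra `A` with the associative product `a ⊗ b ↦ β⁻¹(a b)`. -/
def Untwisted (_ : HomComoduleAlgebra Hb A) : Type :=
  A

variable (Ac : HomComoduleAlgebra Hb A)

instance : Ring Ac.Untwisted where
  __ := (inferInstance : AddCommGroup A)
  mul a b := Ac.regular.untwistedAct a b
  one := Ac.one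
  mul_assoc := Ac.regular.untwistedAct_untwistedAct
  mul_one := Ac.regular.untwistedAct_one
  one_mul a := (Ac.aut.symm_apply_eq).mpr (Ac.oneMul a)
  left_distrib a := (Ac.regular.untwistedAct a).map_add
  right_distrib := Ac.regular.untwistedAct.map_add₂
  zero_mul := Ac.regular.untwistedAct.map_zero₂
  mul_zero a := (Ac.regular.untwistedAct a).map_zero

instance : Algebra k Ac.Untwisted :=
  letI : Module k Ac.Untwisted := (inferInstance : Module k A)
  Algebra.ofModule Ac.regular.untwistedAct.map_smul₂
    (fun r a b => (Ac.regular.untwistedAct a).map_smul r b)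

end HomComoduleAlgebra

namespace MonoidalHomBialgebra

/-- The bialgebra `H` with product `g ⊗ h ↦ α⁻¹(g h)` and coproduct `h ↦ Δ(α(h))`. -/
abbrev Untwisted (Hb : MonoidalHomBialgebra k H) : Type :=
  Hb.regular.Untwisted

end MonoidalHomBialgebra

namespace HomComoduleAlgebra

/-- The coaction `a ↦ ρ(β(a))`, as a morphism of algebras. -/
def untwistedCoaction (Ac : HomComoduleAlgebra Hb A) :
    Ac.Untwisted →ₐ[k] Ac.Untwisted ⊗[k] Hb.Untwisted :=
  AlgHom.ofLinearMap Ac.regular.untwistedCoact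
    (by
      change Ac.coact (Ac.aut Ac.one) = Ac.one ⊗ₜ Hb.one
      rw [Ac.aut_one, Ac.coact_one])
    fun a b => (Ac.regular.untwistedCoact_untwistedAct a b).trans
      (map₂_mul (k := k) (A := Ac.Untwisted) (H := Hb.Untwisted) _ _)

end HomComoduleAlgebra

namespace MonoidalHomBialgebra

variable (Hb)

theorem counit_aut_apply (h : H) : Hb.counit (Hb.aut h) = Hb.counit h :=
  LinearMap.congr_fun Hb.counit_aut h

theorem counit_aut_symm_apply (h : H) : Hb.counit (Hb.aut.symm h) = Hb.counit h := by
  rw [← Hb.counit_aut_apply, LinearEquiv.apply_symm_apply]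

/-- The counit of `H`, as a morphism of algebras. -/
def untwistedCounit : Hb.Untwisted →ₐ[k] k :=
  AlgHom.ofLinearMap Hb.counit Hb.counit_one fun a b =>
    (Hb.counit_aut_symm_apply _).trans (Hb.counit_mul a b)

instance : Bialgebra k Hb.Untwisted :=
  Bialgebra.ofAlgHom Hb.regular.untwistedCoaction Hb.untwistedCounit
    (AlgHom.toLinearMap_injective Hb.regular.regular.untwistedCoact_coassoc)
    (AlgHom.toLinearMap_injective <| LinearMap.ext fun h => by
      apply (TensorProduct.lid k Hb.Untwisted).injective
      refine (LinearMap.congr_fun Hb.counit_left (Hb.aut h)).trans ?_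
      refine (Hb.aut.symm_apply_apply h).trans ?_
      exact (one_smul k h).symm)
    (AlgHom.toLinearMap_injective <| LinearMap.ext
      Hb.regular.regular.lTensor_counit_untwistedCoact)

end MonoidalHomBialgebra

namespace MonoidalHomHopf

variable (Hh : MonoidalHomHopf k H)

theorem aut_symm_counit_aut_smul_one (h : H) :
    Hh.aut.symm (Hh.counit (Hh.aut h) • Hh.one) = Hh.counit h • Hh.one := by
  rw [Hh.counit_aut_apply, map_smul, Hh.aut.symm_apply_eq.mpr Hh.aut_one.symm]

instance : HopfAlgebra k Hh.toMonoidalHomBialgebra.Untwisted where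
  antipode := Hh.antipode
  mul_antipode_rTensor_comul := LinearMap.ext fun h =>
    calc TensorProduct.lift (Hh.mul.compr₂ Hh.aut.symm.toLinearMap)
          (TensorProduct.map Hh.antipode LinearMap.id (Hh.comul (Hh.aut h)))
        = Hh.aut.symm (Hh.counit (Hh.aut h) • Hh.one) := by
          rw [TensorProduct.lift_compr₂]
          exact congrArg Hh.aut.symm (LinearMap.congr_fun Hh.antipode_mul_left (Hh.aut h))
      _ = Hh.counit h • Hh.one := Hh.aut_symm_counit_aut_smul_one h
  mul_antipode_lTensor_comul := LinearMap.ext fun h =>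
    calc TensorProduct.lift (Hh.mul.compr₂ Hh.aut.symm.toLinearMap)
          (TensorProduct.map LinearMap.id Hh.antipode (Hh.comul (Hh.aut h)))
        = Hh.aut.symm (Hh.counit (Hh.aut h) • Hh.one) := by
          rw [TensorProduct.lift_compr₂]
          exact congrArg Hh.aut.symm (LinearMap.congr_fun Hh.antipode_mul_right (Hh.aut h))
      _ = Hh.counit h • Hh.one := Hh.aut_symm_counit_aut_smul_one h

theorem bijective_antipode_untwisted {T : H →ₗ[k] H} (hleft : T ∘ₗ Hh.antipode = LinearMap.id)
    (hright : Hh.antipode ∘ₗ T = LinearMap.id) :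
    Function.Bijective
      (HopfAlgebra.antipode k (A := Hh.toMonoidalHomBialgebra.Untwisted)) :=
  Function.bijective_iff_has_inverse.mpr
    ⟨T, LinearMap.congr_fun hleft, LinearMap.congr_fun hright⟩

end MonoidalHomHopf

namespace HomHopfModule

variable (P : HomHopfModule Ac N)

theorem isRelativeHopfModule_untwisted :
    IsRelativeHopfModule (A := Ac.Untwisted) (H := Hb.Untwisted) Ac.untwistedCoaction
      P.untwistedAct P.untwistedCoact where
  coassoc := LinearMap.congr_fun P.untwistedCoact_coassoc
  lTensor_counit := P.lTensor_counit_untwistedCoact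
  act_act := P.untwistedAct_untwistedAct
  act_one := P.untwistedAct_one
  coact_act := P.untwistedCoact_untwistedAct

theorem mem_coinvariants_untwistedCoact {n : N} :
    n ∈ coinvariants (H := Hb.Untwisted) P.untwistedCoact ↔
      P.coact n = P.aut.symm n ⊗ₜ Hb.one := by
  have h : P.untwistedCoact n = TensorProduct.congr P.aut Hb.aut (P.coact n) :=
    P.untwistedCoact_eq_map_coact n
  have h' : n ⊗ₜ Hb.one = TensorProduct.congr P.aut Hb.aut (P.aut.symm n ⊗ₜ Hb.one) := by
    simp [Hb.aut_one]
  refine Iff.trans (Eq.congr h h') ?_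
  exact (TensorProduct.congr P.aut Hb.aut).injective.eq_iff

theorem aut_mem_coinvariants_untwistedCoact {n : N} :
    P.aut n ∈ coinvariants (H := Hb.Untwisted) P.untwistedCoact ↔
      n ∈ coinvariants (H := Hb.Untwisted) P.untwistedCoact := by
  rw [mem_coinvariants_untwistedCoact, LinearEquiv.symm_apply_apply]
  exact Iff.rfl

theorem coinvSubmoduleOf_eq_coinvariants :
    coinvSubmoduleOf Hb.one P.coact P.aut =
      coinvariants (H := Hb.Untwisted) P.untwistedCoact := by
  ext n
  rw [mem_coinvariants_untwistedCoact, coinvSubmoduleOf, LinearMap.mem_ker, LinearMap.sub_apply,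
    sub_eq_zero]
  rfl

end HomHopfModule

namespace HomComoduleAlgebra

theorem mem_coinvA {a : A} :
    a ∈ coinvA Ac ↔ a ∈ coinvariantSubalgebra (A := Ac.Untwisted) Ac.untwistedCoaction :=
  Ac.regular.mem_coinvariants_untwistedCoact.symm

theorem aut_mem_coinvA {a : A} : Ac.aut a ∈ coinvA Ac ↔ a ∈ coinvA Ac :=
  mem_coinvA.trans (Ac.regular.aut_mem_coinvariants_untwistedCoact.trans mem_coinvA.symm)

theorem aut_symm_mem_coinvA {a : A} (ha : a ∈ coinvA Ac) : Ac.aut.symm a ∈ coinvA Ac := by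
  rwa [← aut_mem_coinvA, LinearEquiv.apply_symm_apply]

theorem map₂_mul_tmul_one (a : A) (w : A ⊗[k] H) :
    TensorProduct.map₂ Ac.mul Hb.mul (a ⊗ₜ Hb.one) w =
      TensorProduct.map (TensorProduct.lift Ac.mul) Hb.aut.toLinearMap
        ((TensorProduct.assoc k A A H).symm (a ⊗ₜ w)) := by
  induction w with
  | zero => simp
  | add w₁ w₂ h₁ h₂ => simp only [map_add, tmul_add, h₁, h₂]
  | tmul c h => simp [Hb.oneMul]

theorem galoisMap_untwistedCoaction : galoisMap Ac.untwistedCoaction = canPreLin Ac := by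
  refine TensorProduct.ext' fun (a b : A) => ?_
  let ψ := TensorProduct.map Ac.aut.toLinearMap Hb.aut.toLinearMap
  have hψ : ψ (Ac.aut.symm a ⊗ₜ Hb.one) = a ⊗ₜ Hb.one := by
    rw [TensorProduct.map_tmul]
    exact congrArg₂ (· ⊗ₜ[k] ·) (Ac.aut.apply_symm_apply a) Hb.aut_one
  refine (map₂_mul (k := k) (A := Ac.Untwisted) (H := Hb.Untwisted) _ _).symm.trans ?_
  calc TensorProduct.map₂ Ac.regular.untwistedAct Hb.regular.regular.untwistedAct
          (a ⊗ₜ Hb.one) (Ac.regular.untwistedCoact b)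
      = TensorProduct.map₂ Ac.regular.untwistedAct Hb.regular.regular.untwistedAct
          (ψ (Ac.aut.symm a ⊗ₜ Hb.one)) (ψ (Ac.coact b)) :=
        congrArg₂ (fun u v => TensorProduct.map₂ _ _ u v) hψ.symm
          (Ac.regular.untwistedCoact_eq_map_coact b)
    _ = TensorProduct.map₂ Ac.mul Hb.mul (Ac.aut.symm a ⊗ₜ Hb.one) (Ac.coact b) :=
        Ac.regular.map₂_untwistedAct_map_aut _ _
    _ = canPreLin Ac (a ⊗ₜ b) := map₂_mul_tmul_one _ _

theorem isColinear_untwistedCoaction {φ : H →ₗ[k] A} (hφ : IsTotalIntegral Ac φ) :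
    IsColinear (A := Ac.Untwisted) (H := Hb.Untwisted) Ac.untwistedCoaction φ := fun h =>
  calc Ac.coact (Ac.aut (φ h))
      = Ac.coact (φ (Hb.aut h)) := congrArg Ac.coact (LinearMap.congr_fun hφ.1 h).symm
    _ = φ.rTensor H (Hb.comul (Hb.aut h)) := LinearMap.congr_fun hφ.2.1 (Hb.aut h)

end HomComoduleAlgebra

namespace HomHopfModule

open HomComoduleAlgebra

variable (P : HomHopfModule Ac N)

theorem lift_act_comp_subtype (Q : Submodule k N) :
    TensorProduct.lift (P.act ∘ₗ Q.subtype) =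
      P.aut.toLinearMap ∘ₗ TensorProduct.lift (P.untwistedAct ∘ₗ Q.subtype) :=
  TensorProduct.ext' fun n a => (P.aut.apply_symm_apply (P.act n a)).symm

theorem span_counit_relations_eq_balancedRelations :
    Submodule.span k {x | ∃ (n n' n'' : coinvariants (H := Hb.Untwisted) P.untwistedCoact)
        (a b : A), b ∈ coinvA Ac ∧ (n' : N) = P.act n b ∧ (n'' : N) = P.aut n ∧
          x = n' ⊗ₜ[k] Ac.aut a - n'' ⊗ₜ[k] Ac.mul b a} =
      balancedRelations P.isRelativeHopfModule_untwisted.coinvariantsAct := by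
  refine congrArg (Submodule.span k) (Set.ext fun x => ⟨?_, ?_⟩)
  · rintro ⟨n, n', n'', a, b, hb, hn', hn'', rfl⟩
    refine ⟨n'', ⟨Ac.aut b, mem_coinvA.mp (aut_mem_coinvA.mpr hb)⟩, Ac.aut a, ?_⟩
    refine congrArg₂ (fun m c => m ⊗ₜ[k] Ac.aut a - n'' ⊗ₜ[k] c) (Subtype.ext ?_)
      (Ac.regular.untwistedAct_aut_aut b a).symm
    exact hn'.trans <| (P.untwistedAct_aut_aut n b).symm.trans <|
      congrArg (P.untwistedAct · (Ac.aut b)) hn''.symm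
  · rintro ⟨m, ⟨(b : A), hb⟩, (a : A), rfl⟩
    have hm : P.aut.symm m ∈ coinvariants (H := Hb.Untwisted) P.untwistedCoact := by
      rw [← P.aut_mem_coinvariants_untwistedCoact, LinearEquiv.apply_symm_apply]
      exact m.2
    let n' := P.isRelativeHopfModule_untwisted.coinvariantsAct m ⟨b, hb⟩
    exact ⟨⟨P.aut.symm m, hm⟩, n', m, Ac.aut.symm a, Ac.aut.symm b,
      aut_symm_mem_coinvA (mem_coinvA.mpr hb), P.untwistedAct_eq_act_symm m b,
      (P.aut.apply_symm_apply _).symm,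
      congrArg₂ (fun c d => n' ⊗ₜ[k] c - m ⊗ₜ[k] d) (Ac.aut.apply_symm_apply a).symm
        (Ac.regular.untwistedAct_eq_act_symm b a)⟩

theorem counitBijectiveR_iff :
    CounitBijectiveR Ac (coinvA Ac) P ↔
      Function.Surjective (IsRelativeHopfModule.counitLift (A := Ac.Untwisted)
        (H := Hb.Untwisted) P.untwistedAct P.untwistedCoact) ∧
      LinearMap.ker (IsRelativeHopfModule.counitLift (A := Ac.Untwisted)
        (H := Hb.Untwisted) P.untwistedAct P.untwistedCoact) =
        balancedRelations P.isRelativeHopfModule_untwisted.coinvariantsAct := by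
  rw [CounitBijectiveR, counitPre, relCoinvR, P.coinvSubmoduleOf_eq_coinvariants,
    P.lift_act_comp_subtype, P.span_counit_relations_eq_balancedRelations, LinearEquiv.ker_comp]
  exact and_congr_left' (P.aut.comp_surjective _)

end HomHopfModule

namespace HomModuleOn

open HomComoduleAlgebra

variable {M : Type} [AddCommGroup M] [Module k M] (S : HomModuleOn Ac (coinvA Ac) M)

/-- The action `m ⊗ b ↦ μ⁻¹(m · b)` of the coinvariants of `A`, which is associative in the usual
sense. -/
def untwistedAct :
    M →ₗ[k] coinvariantSubalgebra (A := Ac.Untwisted) Ac.untwistedCoaction →ₗ[k] M :=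
  (S.act.compr₂ S.aut.symm.toLinearMap).compl₂
    (Subalgebra.toSubmodule (coinvariantSubalgebra (A := Ac.Untwisted)
      Ac.untwistedCoaction)).subtype

theorem untwistedAct_eq_act_symm (m : M)
    (b : coinvariantSubalgebra (A := Ac.Untwisted) Ac.untwistedCoaction) :
    S.untwistedAct m b = S.act (S.aut.symm m) (Ac.aut.symm b.1) := by
  obtain ⟨(b : A), hb⟩ := b
  have h := S.aut_act (S.aut.symm m) (Ac.aut.symm b) (aut_symm_mem_coinvA (mem_coinvA.mpr hb))
  rw [LinearEquiv.apply_symm_apply, LinearEquiv.apply_symm_apply] at h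
  exact (S.aut.symm_apply_eq).mpr h.symm

theorem untwistedAct_aut_aut (m : M) {b : A} (hb : b ∈ coinvA Ac) :
    S.untwistedAct (S.aut m) ⟨Ac.aut b, mem_coinvA.mp (aut_mem_coinvA.mpr hb)⟩ = S.act m b := by
  rw [untwistedAct_eq_act_symm]
  exact congrArg₂ (fun n c => S.act n c) (S.aut.symm_apply_apply m) (Ac.aut.symm_apply_apply b)

theorem isRightAction_untwistedAct : IsRightAction S.untwistedAct where
  act_act m b c := by
    obtain ⟨(b : A), hb⟩ := b
    obtain ⟨(c : A), hc⟩ := c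
    have hb' := aut_symm_mem_coinvA (mem_coinvA.mpr hb)
    have h := S.act_act (S.aut.symm m) _ hb' _ (aut_symm_mem_coinvA (mem_coinvA.mpr hc))
    rw [Ac.aut.apply_symm_apply, S.aut.apply_symm_apply] at h
    calc S.untwistedAct (S.untwistedAct m ⟨b, hb⟩) ⟨c, hc⟩
        = S.aut.symm (S.act (S.act (S.aut.symm m) (Ac.aut.symm b)) c) :=
          congrArg (fun n => S.aut.symm (S.act n c)) (S.untwistedAct_eq_act_symm m ⟨b, hb⟩)
      _ = S.aut.symm (S.act m (Ac.mul (Ac.aut.symm b) (Ac.aut.symm c))) := congrArg S.aut.symm h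
      _ = S.untwistedAct m (⟨b, hb⟩ * ⟨c, hc⟩) :=
          congrArg (fun d => S.aut.symm (S.act m d)) (Ac.regular.untwistedAct_eq_act_symm b c).symm
  act_one m := (congrArg S.aut.symm (S.act_one m)).trans (S.aut.symm_apply_apply m)

theorem relSubR_eq_balancedRelations :
    relSubR Ac.mul Ac.aut (coinvA Ac) S.act S.aut = balancedRelations S.untwistedAct := by
  refine congrArg (Submodule.span k) (Set.ext fun x => ⟨?_, ?_⟩)
  · rintro ⟨m, a, b, hb, rfl⟩
    refine ⟨S.aut m, ⟨Ac.aut b, mem_coinvA.mp (aut_mem_coinvA.mpr hb)⟩, Ac.aut a, ?_⟩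
    exact congrArg₂ (fun n c => n ⊗ₜ[k] Ac.aut a - S.aut m ⊗ₜ[k] c)
      (S.untwistedAct_aut_aut m hb).symm (Ac.regular.untwistedAct_aut_aut b a).symm
  · rintro ⟨m, ⟨(b : A), hb⟩, (a : A), rfl⟩
    refine ⟨S.aut.symm m, Ac.aut.symm a, Ac.aut.symm b,
      aut_symm_mem_coinvA (mem_coinvA.mpr hb), ?_⟩
    rw [S.aut.apply_symm_apply, Ac.aut.apply_symm_apply]
    exact congrArg₂ (fun n (c : A) => n ⊗ₜ[k] a - m ⊗ₜ[k] c)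
      (S.untwistedAct_eq_act_symm m ⟨b, hb⟩) (Ac.regular.untwistedAct_eq_act_symm b a)

theorem quotCoactPreR_eq :
    quotCoactPreR Ac S.aut =
      (TensorProduct.map S.aut.symm.toLinearMap Ac.aut.symm.toLinearMap).rTensor H ∘ₗ
        (TensorProduct.assoc k M A H).symm.toLinearMap ∘ₗ
          Ac.regular.untwistedCoact.lTensor M := by
  refine TensorProduct.ext' fun m a => ?_
  have h (w : A ⊗[k] H) : (TensorProduct.assoc k M A H).symm
      (S.aut.symm m ⊗ₜ TensorProduct.map LinearMap.id Hb.aut.toLinearMap w) =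
      (TensorProduct.map S.aut.symm.toLinearMap Ac.aut.symm.toLinearMap).rTensor H
        ((TensorProduct.assoc k M A H).symm
          (m ⊗ₜ TensorProduct.map Ac.aut.toLinearMap Hb.aut.toLinearMap w)) := by
    induction w with
    | zero => simp
    | add w₁ w₂ h₁ h₂ => simp only [map_add, tmul_add, h₁, h₂]
    | tmul c g => simp
  refine (h (Ac.coact a)).trans ?_
  exact congrArg (fun w => (TensorProduct.map S.aut.symm.toLinearMap
      Ac.aut.symm.toLinearMap).rTensor H ((TensorProduct.assoc k M A H).symm (m ⊗ₜ w)))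
    (Ac.regular.untwistedCoact_eq_map_coact a).symm

theorem tensor_aut_balancedRelations_le :
    balancedRelations S.untwistedAct ≤ (balancedRelations S.untwistedAct).comap
      (TensorProduct.map S.aut.toLinearMap Ac.aut.toLinearMap) := by
  refine balancedRelations_le_iff.mpr ?_
  rintro m ⟨(b : A), hb⟩ (a : A)
  let b' : coinvariantSubalgebra (A := Ac.Untwisted) Ac.untwistedCoaction :=
    ⟨Ac.aut b, mem_coinvA.mp (aut_mem_coinvA.mpr (mem_coinvA.mpr hb))⟩
  have hm : S.aut (S.untwistedAct m ⟨b, hb⟩) = S.untwistedAct (S.aut m) b' :=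
    (S.aut.apply_symm_apply _).trans (S.untwistedAct_aut_aut m (mem_coinvA.mpr hb)).symm
  have ha : Ac.aut (Ac.regular.untwistedAct b a) =
      Ac.regular.untwistedAct (Ac.aut b) (Ac.aut a) :=
    (Ac.aut.apply_symm_apply _).trans (Ac.regular.untwistedAct_aut_aut b a).symm
  refine (congrArg (· ∈ balancedRelations S.untwistedAct) ?_).mpr
    (act_tmul_sub_mem_balancedRelations S.untwistedAct (S.aut m) b' (Ac.aut a))
  refine (map_sub _ _ _).trans ?_
  exact congrArg₂ (fun n c => n ⊗ₜ[k] Ac.aut a - S.aut m ⊗ₜ[k] c) hm ha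

variable {S}

section InducedMaps

variable {ρbar : BalancedTensor S.untwistedAct →ₗ[k] BalancedTensor S.untwistedAct ⊗[k] H}
  {θ : BalancedTensor S.untwistedAct →ₗ[k] BalancedTensor S.untwistedAct}
  (hρbar : ρbar ∘ₗ (balancedRelations S.untwistedAct).mkQ =
    (balancedRelations S.untwistedAct).mkQ.rTensor H ∘ₗ quotCoactPreR Ac S.aut)
  (hθ : θ ∘ₗ (balancedRelations S.untwistedAct).mkQ =
    (balancedRelations S.untwistedAct).mkQ ∘ₗ
      TensorProduct.map S.aut.symm.toLinearMap Ac.aut.symm.toLinearMap)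

include hθ

theorem injective_of_comp_mkQ_eq : Function.Injective θ := by
  let K := balancedRelations S.untwistedAct
  have hleft : Function.LeftInverse (K.mapQ K _ S.tensor_aut_balancedRelations_le) θ := fun q => by
    obtain ⟨y, rfl⟩ := K.mkQ_surjective q
    refine (congrArg (K.mapQ K _ _) (LinearMap.congr_fun hθ y)).trans (congrArg K.mkQ ?_)
    exact (TensorProduct.congr S.aut Ac.aut).apply_symm_apply y
  exact hleft.injective

include hρbar

theorem eq_rTensor_balancedCoaction (q : BalancedTensor S.untwistedAct) :
    ρbar q = θ.rTensor H (balancedCoaction (H := Hb.Untwisted) S.untwistedAct q) := by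
  obtain ⟨y, rfl⟩ := (balancedRelations S.untwistedAct).mkQ_surjective q
  refine (LinearMap.congr_fun hρbar y).trans ?_
  rw [quotCoactPreR_eq]
  have h := (LinearMap.rTensor_comp H _ _).symm.trans
    ((congrArg (LinearMap.rTensor H) hθ).trans (LinearMap.rTensor_comp H _ _))
  exact (LinearMap.congr_fun h _).symm

theorem eq_tmul_one_iff_mem_coinvariants {q : BalancedTensor S.untwistedAct} :
    ρbar q = θ q ⊗ₜ Hb.one ↔
      q ∈ coinvariants (balancedCoaction (H := Hb.Untwisted) S.untwistedAct) := by
  rw [eq_rTensor_balancedCoaction hρbar hθ]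
  exact (Module.Flat.rTensor_preserves_injective_linearMap (M := H) θ
    (injective_of_comp_mkQ_eq hθ)).eq_iff (b := q ⊗ₜ Hb.one)

end InducedMaps

theorem unitBijectiveR_of_bijective
    (h : Function.Bijective (balancedUnit (H := Hb.Untwisted) S.untwistedAct)) :
    UnitBijectiveR Ac (coinvA Ac) S := by
  rw [UnitBijectiveR, S.relSubR_eq_balancedRelations]
  intro ρbar θ hρbar hθ
  refine ⟨fun m => (eq_tmul_one_iff_mem_coinvariants hρbar hθ).mpr (balancedUnit _ _).2,
    Subtype.val_injective.comp (h.injective.comp S.aut.symm.injective), fun x hx => ?_⟩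
  obtain ⟨m, hm⟩ := h.surjective ⟨x, (eq_tmul_one_iff_mem_coinvariants hρbar hθ).mp hx⟩
  refine ⟨S.aut m, ?_⟩
  rw [S.aut.symm_apply_apply]
  exact congrArg Subtype.val hm

end HomModuleOn

end Untwisting

end

/-! STATEMENT 15 (Schneider-type affineness): If `can` is surjective and there is a
total integral, then `(F,G)` is a pair of inverse equivalences: all adjunction units
and counits are bijective. -/
theorem statement15
    (k : Type) [Field k] (H : Type) [AddCommGroup H] [Module k H]
    (Hh : MonoidalHomHopf k H)
    (Sinv : H →ₗ[k] H)
    (hSinv₁ : Sinv ∘ₗ Hh.antipode = LinearMap.id)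
    (hSinv₂ : Hh.antipode ∘ₗ Sinv = LinearMap.id)
    (A : Type) [AddCommGroup A] [Module k A]
    (Ac : HomComoduleAlgebra Hh.toMonoidalHomBialgebra A)
    -- there exists a total integral
    (φ : H →ₗ[k] A) (hφ : IsTotalIntegral Ac φ)
    -- can : A ⊗_B A → A ⊗ H is surjective (equivalently, its lift to A ⊗ A is)
    (hcan : Function.Surjective (canPreLin Ac)) :
    (∀ (M : Type) [AddCommGroup M] [Module k M] (S : HomModuleOn Ac (coinvA Ac) M),
        UnitBijectiveR Ac (coinvA Ac) S) ∧
    (∀ (N : Type) [AddCommGroup N] [Module k N] (P : HomHopfModule Ac N),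
        CounitBijectiveR Ac (coinvA Ac) P) := by
  have hA := Ac.regular.isRelativeHopfModule_untwisted.toIsRightCoaction
  have hS := Hh.bijective_antipode_untwisted hSinv₁ hSinv₂
  have hφ_colinear := HomComoduleAlgebra.isColinear_untwistedCoaction hφ
  have hφ_one := hφ.2.2
  have hgalois : Function.Surjective (RelativeHopf.galoisMap Ac.untwistedCoaction) := by
    rwa [HomComoduleAlgebra.galoisMap_untwistedCoaction]
  refine ⟨fun M _ _ S => S.unitBijectiveR_of_bijective ⟨?_, ?_⟩, fun N _ _ P => ?_⟩
  · exact RelativeHopf.balancedUnit_injective hA hφ_colinear hφ_one S.isRightAction_untwistedAct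
  · exact RelativeHopf.balancedUnit_surjective hA hφ_colinear hφ_one
  · have hN := P.isRelativeHopfModule_untwisted
    exact P.counitBijectiveR_iff.mpr
      ⟨hN.counitLift_surjective hA hS hφ_colinear hφ_one hgalois,
        hN.ker_counitLift hA hS hφ_colinear hφ_one hgalois⟩
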